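/- arXiv:1801.08046 — 2 statements merged into one kernel-verified Lean document; each statement's English description precedes it below -/
import Mathlib

section
/- Let T be a locally finite simplicial tree and Γ a discrete group of automorphisms of T. Let γ₀ ∈ Γ be loxodromic with translation length ℓ(γ₀) and translation axis Ax(γ₀). Let k₀ be the minimal order of the stabiliser in Γ of a vertex of Ax(γ₀), and let Γ₀ be the stabiliser of Ax(γ₀) in Γ. Then for every γ ∈ Γ − Γ₀, the length of the geodesic segment γ·Ax(γ₀) ∩ Ax(γ₀) is strictly less than (k₀ + 1)·ℓ(γ₀) − 1. -/
/-!
The axis of a loxodromic automorphism of a tree is a geodesic line on which it acts as a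
translation. If two loxodromics `α`, `β` of translation length `ℓ` have axes sharing a segment of
length `L`, then, after replacing one of them by its inverse if necessary, both translate that
segment in the same direction, so `β⁻ʲ αʲ` fixes the `t`-th vertex of the segment as soon as
`t + jℓ ≤ L`. Every vertex `w` of the axis of `α` is a translate of such a vertex with `t < ℓ`. When
`(k + 1)ℓ - 1 ≤ L`, with `k` the order of the stabiliser of `w`, this gives `k + 1` elements of a
group of order `k`, so `αⁿ = βⁿ` for some `n > 0`, and then `α` and `β` have the axis of `αⁿ` in
common. The theorem is the case of `γ₀` and `γ γ₀ γ⁻¹`.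
-/

theorem exists_pow_eq_pow_of_inv_mul_mem {M : Type*} [Group M] {H : Subgroup M} [Finite H]
    {a b : M} (h : ∀ j ≤ Nat.card H, (b ^ j)⁻¹ * a ^ j ∈ H) : ∃ n, 0 < n ∧ a ^ n = b ^ n := by
  let f : Fin (Nat.card H + 1) → H := fun j ↦ ⟨(b ^ (j : ℕ))⁻¹ * a ^ (j : ℕ), h j (by lia)⟩
  have hf : ¬ f.Injective := fun hinj ↦ by
    simpa using Nat.card_le_card_of_injective f hinj
  obtain ⟨i, j, hij, hlt⟩ : ∃ i j, f i = f j ∧ i < j := by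
    obtain ⟨i, j, hij, hne⟩ := Function.not_injective_iff.1 hf
    rcases hne.lt_or_gt with hlt | hlt
    exacts [⟨i, j, hij, hlt⟩, ⟨j, i, hij.symm, hlt⟩]
  have hij : (b ^ (i : ℕ))⁻¹ * a ^ (i : ℕ) = (b ^ (j : ℕ))⁻¹ * a ^ (j : ℕ) :=
    congrArg Subtype.val hij
  refine ⟨j - i, by lia, ?_⟩
  rw [pow_sub a hlt.le, pow_sub b hlt.le, mul_inv_eq_iff_eq_mul, mul_assoc, hij,
    mul_inv_cancel_left]

section Graph

variable {V : Type*} {G : SimpleGraph V}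

theorem exists_adj_dist_add_one_eq {r x : V} (h : G.dist r x ≠ 0) :
    ∃ y, G.Adj x y ∧ G.dist r y + 1 = G.dist r x := by
  obtain ⟨p, hp⟩ := SimpleGraph.exists_walk_of_dist_ne_zero h
  have hnil : ¬ p.Nil := fun hn ↦ h (hp ▸ SimpleGraph.Walk.length_eq_zero_iff.2 hn)
  have hadj : G.Adj p.penultimate x := p.adj_penultimate hnil
  have hle : G.dist r p.penultimate ≤ p.length - 1 := by
    simpa using G.dist_le p.dropLast
  have := hadj.diff_dist_adj (u := r)
  exact ⟨_, hadj.symm, by lia⟩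

theorem eq_of_adj_of_dist_lt (hG : G.IsAcyclic) {r x y z : V} (hy : G.Adj x y) (hz : G.Adj x z)
    (hry : G.dist r y < G.dist r x) (hrz : G.dist r z < G.dist r x) : y = z := by
  have exists_path_through (a : V) (ha : G.Adj x a) (hra : G.dist r a < G.dist r x) :
      ∃ p : G.Path r x, p.1.penultimate = a := by
    have hreach : G.Reachable r a := (SimpleGraph.Reachable.of_dist_ne_zero (by lia)).trans
      ha.reachable
    obtain ⟨p, hp⟩ := hreach.exists_walk_length_eq_dist
    have hle := G.dist_le (p.concat ha.symm)
    rw [SimpleGraph.Walk.length_concat] at hle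
    exact ⟨⟨p.concat ha.symm, SimpleGraph.Walk.isPath_of_length_eq_dist _
      (by rw [SimpleGraph.Walk.length_concat]; lia)⟩, by simp⟩
  obtain ⟨p, rfl⟩ := exists_path_through y hy hry
  obtain ⟨q, rfl⟩ := exists_path_through z hz hrz
  rw [(hG.subsingleton_path r x).elim p q]

theorem dist_eq_add_of_adj_of_dist_lt (hG : G.IsAcyclic) {u v x y : V} (hxy : G.Adj x y)
    (hu : G.dist u y < G.dist u x) (hv : G.dist v x < G.dist v y) :
    G.dist u v = G.dist u x + G.dist v x := by
  induction hn : G.dist u y generalizing x y with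
  | zero =>
    have hreach : G.Reachable u y := (SimpleGraph.Reachable.of_dist_ne_zero (by lia)).trans
      hxy.reachable
    obtain rfl : u = y := hreach.dist_eq_zero_iff.1 hn
    have hux : G.dist u x = 1 := SimpleGraph.dist_eq_one_iff_adj.2 hxy.symm
    have := hxy.diff_dist_adj (u := v)
    rw [SimpleGraph.dist_comm]
    lia
  | succ n ih =>
    obtain ⟨z, hyz, hz⟩ := exists_adj_dist_add_one_eq (G := G) (r := u) (x := y) (by lia)
    have hzx : z ≠ x := fun h ↦ by subst h; lia
    have hvyz : G.dist v y < G.dist v z := by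
      have hne := hG.dist_ne_of_adj hyz (SimpleGraph.Reachable.of_dist_ne_zero (u := v) (by lia))
      by_contra hle
      exact hzx (eq_of_adj_of_dist_lt hG hyz hxy.symm (by lia) hv)
    have := ih hyz (by lia) hvyz (by lia)
    have := hxy.diff_dist_adj (u := u)
    have := hxy.diff_dist_adj (u := v)
    lia

theorem exists_geodesic {u v : V} (h : G.Reachable u v) :
    ∃ q : ℕ → V, q 0 = u ∧ q (G.dist u v) = v ∧
      ∀ s n, s + n ≤ G.dist u v → G.dist (q s) (q (s + n)) = n := by
  obtain ⟨p, hp⟩ := h.exists_walk_length_eq_dist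
  refine ⟨p.getVert, by simp, by simp [← hp], fun s n hsn ↦ ?_⟩
  have hsub : ((p.drop s).take n).IsSubwalk p :=
    ((p.drop s).isSubwalk_take n).trans (p.isSubwalk_drop s)
  rw [← p.drop_getVert, ← SimpleGraph.length_eq_dist_of_subwalk hp hsub,
    SimpleGraph.Walk.take_length, SimpleGraph.Walk.drop_length]
  lia

theorem edist_map_le {W : Type*} {H : SimpleGraph W} (f : G →g H) (u v : V) :
    H.edist (f u) (f v) ≤ G.edist u v :=
  le_iInf fun p ↦ by simpa using SimpleGraph.edist_le (p.map f)

end Graph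

section GeodesicLine

variable {V : Type*} {G : SimpleGraph V} {p q : ℤ → V}

/-- A bi-infinite geodesic of `G`, parametrised by arc length. -/
def IsGeodesicLine (G : SimpleGraph V) (p : ℤ → V) : Prop :=
  ∀ i j, G.dist (p i) (p j) = (i - j).natAbs

namespace IsGeodesicLine

theorem adj (hp : IsGeodesicLine G p) {i j : ℤ} (hij : (i - j).natAbs = 1) :
    G.Adj (p i) (p j) := by
  rw [← SimpleGraph.dist_eq_one_iff_adj, hp, hij]

theorem of_adj_of_ne (hG : G.IsAcyclic) (hadj : ∀ i, G.Adj (p i) (p (i + 1)))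
    (hne : ∀ i, p i ≠ p (i + 2)) : IsGeodesicLine G p := by
  have dist_add (i : ℤ) (n : ℕ) :
      G.dist (p i) (p (i + n)) = n ∧ G.dist (p i) (p (i + n + 1)) = n + 1 := by
    induction n with
    | zero => simpa using hadj i
    | succ n ih =>
      obtain ⟨ihn, ihn'⟩ := ih
      have hprev := hadj (i + n)
      have hnext := hadj (i + n + 1)
      have hback := hne (i + n)
      rw [add_assoc _ 1 1, one_add_one_eq_two] at hnext
      push_cast
      rw [← add_assoc i, add_assoc _ 1 1, one_add_one_eq_two]
      refine ⟨ihn', ?_⟩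
      rcases hG.dist_eq_dist_add_one_of_adj_of_reachable (p i) hnext
        (SimpleGraph.Reachable.of_dist_ne_zero (by lia)) with hlt | hgt
      · exact absurd (eq_of_adj_of_dist_lt (r := p i) hG hprev.symm hnext (by lia) (by lia)) hback
      · lia
  intro i j
  rcases le_total i j with h | h
  · obtain ⟨n, rfl⟩ := Int.le.dest h
    rw [(dist_add i n).1]; lia
  · obtain ⟨n, rfl⟩ := Int.le.dest h
    rw [SimpleGraph.dist_comm, (dist_add j n).1]; lia

theorem eq_of_endpoints_eq (hG : G.IsAcyclic) (hp : IsGeodesicLine G p) (hq : IsGeodesicLine G q)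
    {L : ℕ} (h0 : p 0 = q 0) (hL : p L = q L) {t : ℕ} (ht : t ≤ L) : p t = q t := by
  induction t with
  | zero => exact_mod_cast h0
  | succ t ih =>
    have ih : p t = q t := ih (by lia)
    have hq_adj : G.Adj (q t) (q (t + 1 : ℕ)) := hq.adj (by lia)
    refine eq_of_adj_of_dist_lt (r := p L) hG (hp.adj (by lia)) (ih ▸ hq_adj) ?_ ?_
    · rw [hp, hp]; lia
    · rw [ih, hL, hq, hq]; lia

theorem exists_projection (hT : G.IsTree) (hp : IsGeodesicLine G p) (v : V) :
    ∃ i, ∀ j, G.dist v (p j) = G.dist v (p i) + (j - i).natAbs := by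
  let i := Function.argmin fun j ↦ G.dist v (p j)
  have hi (j : ℤ) : G.dist v (p i) ≤ G.dist v (p j) := Function.argmin_le (fun j ↦ G.dist v (p j)) j
  refine ⟨i, fun j ↦ ?_⟩
  obtain rfl | hji := eq_or_ne j i
  · simp
  obtain ⟨s, hs, hsj⟩ : ∃ s, (i - s).natAbs = 1 ∧ (j - s).natAbs < (j - i).natAbs := by
    rcases hji.lt_or_gt with h | h
    exacts [⟨i - 1, by lia, by lia⟩, ⟨i + 1, by lia, by lia⟩]
  have hadj : G.Adj (p i) (p s) := hp.adj hs
  have := dist_eq_add_of_adj_of_dist_lt hT.isAcyclic hadj (u := p j) (v := v)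
    (by rwa [hp, hp]) ((hi s).lt_of_ne (hT.dist_ne_of_adj v hadj))
  rw [hp] at this
  rw [SimpleGraph.dist_comm, this, add_comm]

end IsGeodesicLine

end GeodesicLine

section Action

variable {V Γ : Type*} [Group Γ] [MulAction Γ V] {G : SimpleGraph V} {g : Γ} {p : ℤ → V} {ℓ : ℕ}

/-- The group `Γ` acts on the graph `G` by automorphisms. Only preservation of adjacency is asked
for, as its reflection by `g` is its preservation by `g⁻¹`. -/
def ActsByAutomorphisms (Γ : Type*) {V : Type*} [Group Γ] [MulAction Γ V] (G : SimpleGraph V) :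
    Prop :=
  ∀ (g : Γ) (u v : V), G.Adj u v → G.Adj (g • u) (g • v)

theorem dist_smul_smul (hΓ : ActsByAutomorphisms Γ G) (g : Γ) (u v : V) :
    G.dist (g • u) (g • v) = G.dist u v := by
  have edist_smul_le (g : Γ) (u v : V) : G.edist (g • u) (g • v) ≤ G.edist u v :=
    edist_map_le (⟨(g • ·), hΓ g _ _⟩ : G →g G) u v
  refine congrArg ENat.toNat ((edist_smul_le g u v).antisymm ?_)
  simpa using edist_smul_le g⁻¹ (g • u) (g • v)

theorem zpow_smul_apply_eq {c : ℤ} (h : ∀ i, g • p i = p (i + c)) (n i : ℤ) :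
    g ^ n • p i = p (i + n * c) := by
  induction n generalizing i with
  | zero => simp
  | succ n ih => rw [zpow_add_one, mul_smul, h, ih]; congr 1; ring
  | pred n ih =>
    rw [zpow_sub_one, mul_smul, ← sub_add_cancel i c, ← h, inv_smul_smul, ih]; congr 1; ring

theorem exists_lt_forall_apply_add_eq (hℓ : 0 < ℓ) (h : ∀ i, g • p i = p (i + ℓ)) (i : ℤ) :
    ∃ r < ℓ, ∃ n : ℤ, ∀ j, p (i + j) = g ^ n • p (r + j) := by
  have hnonneg : 0 ≤ i % ℓ := Int.emod_nonneg i (by lia)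
  have hlt : i % ℓ < ℓ := Int.emod_lt_of_pos i (by lia)
  refine ⟨(i % ℓ).toNat, by lia, i / ℓ, fun j ↦ ?_⟩
  rw [zpow_smul_apply_eq h, Int.toNat_of_nonneg hnonneg]
  congr 1
  linarith [Int.emod_add_ediv_mul i ℓ]

theorem exists_periodic_extension (hℓ : 0 < ℓ) (q : ℕ → V) (hq : q ℓ = g • q 0) :
    ∃ p : ℤ → V, (∀ i, g • p i = p (i + ℓ)) ∧ ∀ t ≤ ℓ, p t = q t := by
  let p : ℤ → V := fun i ↦ g ^ (i / ℓ) • q (i % ℓ).toNat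
  have hp (i : ℤ) : g • p i = p (i + ℓ) := by
    have hdiv : (i + ℓ) / (ℓ : ℤ) = i / ℓ + 1 := Int.add_ediv_of_dvd_right dvd_rfl |>.trans (by
      rw [Int.ediv_self (by lia)])
    simp only [p, hdiv, Int.add_emod_right]
    rw [smul_smul, zpow_add_one, (Commute.self_zpow g _).eq]
  have hlt (t : ℕ) (ht : t < ℓ) : p t = q t := by
    simp only [p]
    rw [Int.ediv_eq_zero_of_lt (by lia) (by lia), Int.emod_eq_of_lt (by lia) (by lia)]
    simp
  refine ⟨p, hp, fun t ht ↦ ?_⟩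
  rcases ht.lt_or_eq with ht | rfl
  · exact hlt t ht
  · rw [hq, ← hlt 0 hℓ, hp]; simp

/-- The set `Ax(g)` of vertices moved by distance `ℓ`; it is meant to be used when `ℓ` is the
translation length of `g`. -/
def translationAxis (G : SimpleGraph V) (g : Γ) (ℓ : ℕ) : Set V :=
  {v | G.dist v (g • v) = ℓ}

/-- `g` is loxodromic on the tree `G` with translation length `ℓ`. A fixed point of the geometric
realisation is a vertex or the midpoint of an edge, so there is none when `g` moves every vertex
and inverts no edge. -/
structure IsLoxodromic (G : SimpleGraph V) (g : Γ) (ℓ : ℕ) : Prop where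
  pos : 0 < ℓ
  le_dist : ∀ v, ℓ ≤ G.dist v (g • v)
  nonempty_axis : (translationAxis G g ℓ).Nonempty
  not_inverts : ∀ u v, ¬ (G.Adj u v ∧ g • u = v ∧ g • v = u)

theorem translationAxis_conj (hΓ : ActsByAutomorphisms Γ G) (g h : Γ) (ℓ : ℕ) :
    translationAxis G (h * g * h⁻¹) ℓ = (h • ·) '' translationAxis G g ℓ := by
  ext v
  obtain ⟨u, rfl⟩ := MulAction.surjective h v
  rw [(MulAction.injective h).mem_set_image]
  simp [translationAxis, mul_smul, dist_smul_smul hΓ]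

theorem IsLoxodromic.conj (hΓ : ActsByAutomorphisms Γ G) (hg : IsLoxodromic G g ℓ) (h : Γ) :
    IsLoxodromic G (h * g * h⁻¹) ℓ where
  pos := hg.pos
  le_dist v := by
    obtain ⟨u, rfl⟩ := MulAction.surjective h v
    simpa [mul_smul, dist_smul_smul hΓ] using hg.le_dist u
  nonempty_axis := by
    rw [translationAxis_conj hΓ]
    exact hg.nonempty_axis.image _
  not_inverts u v := fun ⟨huv, hu, hv⟩ ↦ hg.not_inverts (h⁻¹ • u) (h⁻¹ • v)
    ⟨hΓ _ _ _ huv, by simp [← hu, mul_smul], by simp [← hv, mul_smul]⟩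

/-- `p` is a geodesic line along which `g` translates by `ℓ` in the positive direction. -/
structure TranslatesLine (G : SimpleGraph V) (g : Γ) (p : ℤ → V) (ℓ : ℕ) : Prop where
  isGeodesicLine : IsGeodesicLine G p
  smul_apply : ∀ i, g • p i = p (i + ℓ)

/-- Gluing the translates of a geodesic from `v` to `g • v`, where `v` is on the axis, creates no
backtrack: one at `g • v` would either invert an edge or move the second vertex of the geodesic by
less than `ℓ`. -/
theorem IsLoxodromic.apply_ne_apply_add_two (hg : IsLoxodromic G g ℓ)
    (hp : ∀ i, g • p i = p (i + ℓ))
    (hgeod : ∀ s n : ℕ, s + n ≤ ℓ → G.dist (p s) (p (s + n)) = n) {r : ℕ} (hr : r < ℓ) :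
    p r ≠ p (r + 2) := by
  intro hback
  have hrℓ : r + 1 = ℓ := by
    by_contra hne
    have hdist := hgeod r 2 (by lia)
    rw [Nat.cast_ofNat, ← hback, SimpleGraph.dist_self] at hdist
    lia
  have hsmul : g • p 1 = p r := by rw [hp, hback]; congr 1; lia
  obtain rfl | hr0 := r.eq_zero_or_pos
  · have hadj : G.Adj (p 0) (p 1) :=
      SimpleGraph.dist_eq_one_iff_adj.1 (by simpa using hgeod 0 1 (by lia))
    exact hg.not_inverts (p 0) (p 1) ⟨hadj, by rw [hp]; congr 1; lia, hsmul⟩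
  · have hle := hg.le_dist (p 1)
    have hdist := hgeod 1 (r - 1) (by lia)
    rw [show ((1 : ℕ) : ℤ) + (r - 1 : ℕ) = r by lia, Nat.cast_one, ← hsmul] at hdist
    lia

theorem IsLoxodromic.exists_translatesLine (hG : G.IsAcyclic) (hΓ : ActsByAutomorphisms Γ G)
    (hg : IsLoxodromic G g ℓ) : ∃ p, TranslatesLine G g p ℓ := by
  obtain ⟨v, hv⟩ := hg.nonempty_axis
  have hv : G.dist v (g • v) = ℓ := hv
  have hpos := hg.pos
  obtain ⟨q, hq0, hqℓ, hq⟩ := exists_geodesic (G := G) (u := v) (v := g • v)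
    (SimpleGraph.Reachable.of_dist_ne_zero (by lia))
  rw [hv] at hqℓ hq
  obtain ⟨p, hp, hpq⟩ := exists_periodic_extension hpos q (by rw [hqℓ, hq0])
  have hgeod (s n : ℕ) (hsn : s + n ≤ ℓ) : G.dist (p s) (p (s + n)) = n := by
    rw [← Nat.cast_add, hpq s (by lia), hpq _ hsn, hq s n hsn]
  refine ⟨p, .of_adj_of_ne hG (fun i ↦ ?_) fun i ↦ ?_, hp⟩ <;>
    obtain ⟨r, hr, n, hn⟩ := exists_lt_forall_apply_add_eq hpos hp i <;>
    have hi : p i = g ^ n • p r := by simpa using hn 0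
  · rw [hi, hn]
    exact hΓ _ _ _ (SimpleGraph.dist_eq_one_iff_adj.1 (by simpa using hgeod r 1 hr))
  · rw [hi, hn]
    exact (MulAction.injective (g ^ n)).ne (hg.apply_ne_apply_add_two hp hgeod hr)

theorem TranslatesLine.pow (h : TranslatesLine G g p ℓ) (n : ℕ) :
    TranslatesLine G (g ^ n) p (n * ℓ) where
  isGeodesicLine := h.isGeodesicLine
  smul_apply i := by
    rw [← zpow_natCast, zpow_smul_apply_eq h.smul_apply]; push_cast; rfl

theorem TranslatesLine.translationAxis_eq (hT : G.IsTree) (hΓ : ActsByAutomorphisms Γ G)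
    (h : TranslatesLine G g p ℓ) (hℓ : 0 < ℓ) : translationAxis G g ℓ = Set.range p := by
  ext v
  refine ⟨fun (hv : G.dist v (g • v) = ℓ) ↦ ?_, ?_⟩
  · obtain ⟨i, hi⟩ := h.isGeodesicLine.exists_projection hT v
    have hgi (j : ℤ) : G.dist (g • v) (p j) = G.dist v (p i) + (j - ℓ - i).natAbs := by
      rw [← hi, ← dist_smul_smul hΓ g v, h.smul_apply, sub_add_cancel]
    have hdist := dist_eq_add_of_adj_of_dist_lt hT.isAcyclic (u := g • v) (v := v)
      (h.isGeodesicLine.adj (i := i) (j := i + 1) (by lia)) (by rw [hgi, hgi]; lia)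
      (by rw [hi (i + 1)]; lia)
    rw [SimpleGraph.dist_comm, hv, hgi] at hdist
    exact ⟨i, (hT.connected.dist_eq_zero_iff.1 (show G.dist v (p i) = 0 by lia)).symm⟩
  · rintro ⟨i, rfl⟩
    change G.dist _ _ = _
    rw [h.smul_apply, h.isGeodesicLine]
    lia

theorem TranslatesLine.exists_reparam (h : TranslatesLine G g p ℓ) {x y : V}
    (hx : x ∈ Set.range p) (hy : y ∈ Set.range p) :
    ∃ (g' : Γ) (p' : ℤ → V), TranslatesLine G g' p' ℓ ∧ Set.range p' = Set.range p ∧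
      p' 0 = x ∧ p' (G.dist x y) = y := by
  obtain ⟨a, rfl⟩ := hx
  obtain ⟨b, rfl⟩ := hy
  rw [h.isGeodesicLine]
  rcases le_total a b with hab | hba
  · refine ⟨g, fun t ↦ p (a + t), ⟨fun i j ↦ ?_, fun i ↦ ?_⟩,
      (Equiv.addLeft a).surjective.range_comp p, by simp, congrArg p (by lia)⟩
    · rw [h.isGeodesicLine]; congr 1; ring
    · rw [h.smul_apply, add_assoc]
  · refine ⟨g⁻¹, fun t ↦ p (a - t), ⟨fun i j ↦ ?_, fun i ↦ ?_⟩,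
      (Equiv.subLeft a).surjective.range_comp p, by simp, congrArg p (by lia)⟩
    · rw [h.isGeodesicLine]; lia
    · rw [inv_smul_eq_iff, h.smul_apply]; congr 1; ring

theorem TranslatesLine.inv_mul_mem_stabilizer {a b : Γ} {q : ℤ → V} (hp : TranslatesLine G a p ℓ)
    (hq : TranslatesLine G b q ℓ) {L t j : ℕ} (hpq : ∀ s : ℕ, s ≤ L → p s = q s)
    (hL : t + j * ℓ ≤ L) : (b ^ j)⁻¹ * a ^ j ∈ MulAction.stabilizer Γ (p t) := by
  rw [MulAction.mem_stabilizer_iff, mul_smul, inv_smul_eq_iff, hpq t (by lia),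
    (hq.pow j).smul_apply, ← hpq t (by lia), (hp.pow j).smul_apply]
  exact_mod_cast hpq _ hL

theorem TranslatesLine.range_eq_range (hT : G.IsTree) (hΓ : ActsByAutomorphisms Γ G) {a b : Γ}
    {q : ℤ → V} (hℓ : 0 < ℓ) (hp : TranslatesLine G a p ℓ) (hq : TranslatesLine G b q ℓ)
    {w : V} (hw : w ∈ Set.range p) [Finite (MulAction.stabilizer Γ w)] {L : ℕ} (h0 : p 0 = q 0)
    (h_end : p L = q L) (hL : (Nat.card (MulAction.stabilizer Γ w) + 1) * ℓ ≤ L + 1) :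
    Set.range p = Set.range q := by
  have hpq : ∀ s : ℕ, s ≤ L → p s = q s := fun s ↦
    hp.isGeodesicLine.eq_of_endpoints_eq hT.isAcyclic hq.isGeodesicLine h0 h_end
  obtain ⟨i, rfl⟩ := hw
  obtain ⟨t, ht, m, hm⟩ := exists_lt_forall_apply_add_eq hℓ hp.smul_apply i
  have e : MulAction.stabilizer Γ (p t) ≃* MulAction.stabilizer Γ (p i) :=
    MulAction.stabilizerEquivStabilizer (g := a ^ m) (by simpa using hm 0)
  have : Finite (MulAction.stabilizer Γ (p t)) := .of_equiv _ e.symm.toEquiv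
  rw [← Nat.card_congr e.toEquiv] at hL
  obtain ⟨n, hn, hab⟩ := exists_pow_eq_pow_of_inv_mul_mem
    (fun j hj ↦ hp.inv_mul_mem_stabilizer hq hpq (by nlinarith))
  rw [← (hp.pow n).translationAxis_eq hT hΓ (by positivity), hab,
    (hq.pow n).translationAxis_eq hT hΓ (by positivity)]

theorem IsLoxodromic.translationAxis_eq_of_le_dist (hT : G.IsTree) (hΓ : ActsByAutomorphisms Γ G)
    {a b : Γ} (ha : IsLoxodromic G a ℓ) (hb : IsLoxodromic G b ℓ) {w x y : V}
    (hw : w ∈ translationAxis G a ℓ) [Finite (MulAction.stabilizer Γ w)]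
    (hx : x ∈ translationAxis G a ℓ ∩ translationAxis G b ℓ)
    (hy : y ∈ translationAxis G a ℓ ∩ translationAxis G b ℓ)
    (hL : (Nat.card (MulAction.stabilizer Γ w) + 1) * ℓ ≤ G.dist x y + 1) :
    translationAxis G a ℓ = translationAxis G b ℓ := by
  obtain ⟨p, hp⟩ := ha.exists_translatesLine hT.isAcyclic hΓ
  obtain ⟨q, hq⟩ := hb.exists_translatesLine hT.isAcyclic hΓ
  rw [hp.translationAxis_eq hT hΓ ha.pos] at hw hx hy ⊢
  rw [hq.translationAxis_eq hT hΓ hb.pos] at hx hy ⊢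
  obtain ⟨a', p', hp', hpp', hp0, hpL⟩ := hp.exists_reparam hx.1 hy.1
  obtain ⟨b', q', hq', hqq', hq0, hqL⟩ := hq.exists_reparam hx.2 hy.2
  rw [← hpp'] at hw
  rw [← hpp', ← hqq']
  exact hp'.range_eq_range hT hΓ ha.pos hq' hw (hp0.trans hq0.symm) (hpL.trans hqL.symm) hL

end Action

theorem axis_intersection_length_lt_general {V Γ : Type*} [Group Γ] [MulAction Γ V]
    (G : SimpleGraph V) (hT : G.IsTree) (hΓ : ActsByAutomorphisms Γ G) (γ₀ : Γ) (ℓ : ℕ)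
    (hγ₀ : IsLoxodromic G γ₀ ℓ) (w : V) (hw : w ∈ translationAxis G γ₀ ℓ)
    [Finite (MulAction.stabilizer Γ w)] (γ : Γ)
    (hγ : (γ • ·) '' translationAxis G γ₀ ℓ ≠ translationAxis G γ₀ ℓ) :
    ∀ x ∈ translationAxis G γ₀ ℓ ∩ (γ • ·) '' translationAxis G γ₀ ℓ,
      ∀ y ∈ translationAxis G γ₀ ℓ ∩ (γ • ·) '' translationAxis G γ₀ ℓ,
        (G.dist x y : ℤ) < (Nat.card (MulAction.stabilizer Γ w) + 1 : ℤ) * ℓ - 1 := by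
  rw [← translationAxis_conj hΓ] at hγ ⊢
  intro x hx y hy
  by_contra! hle
  have hL : (Nat.card (MulAction.stabilizer Γ w) + 1) * ℓ ≤ G.dist x y + 1 := by zify; linarith
  exact hγ (hγ₀.translationAxis_eq_of_le_dist hT hΓ (hγ₀.conj hΓ γ) hw hx hy hL).symm

/-- Let `T` be a locally finite simplicial tree and `Γ` a discrete group of
automorphisms of `T` (vertex stabilisers are finite). Let `γ₀ ∈ Γ` be loxodromic (no fixed
vertex and no inverted edge) with translation length `ℓ(γ₀) = min_v d(v, γ₀ v) > 0` and
translation axis `Ax(γ₀) = {v : d(v, γ₀ v) = ℓ(γ₀)}`. Let `k₀` be the minimal order of the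
stabiliser in `Γ` of a vertex of `Ax(γ₀)` and let `Γ₀` be the stabiliser of `Ax(γ₀)` in `Γ`.
Then for every `γ ∈ Γ − Γ₀`, the length of the geodesic segment `γ·Ax(γ₀) ∩ Ax(γ₀)` is
strictly less than `(k₀ + 1)·ℓ(γ₀) − 1`. -/
theorem axis_intersection_length_lt
    {V : Type*} (G : SimpleGraph V) (hT : G.IsTree)
    (hlf : ∀ v : V, (G.neighborSet v).Finite)
    (Γ : Subgroup (Equiv.Perm V))
    (hΓG : ∀ g ∈ Γ, ∀ u w : V, G.Adj (g u) (g w) ↔ G.Adj u w)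
    (hdisc : ∀ v : V, {g : Equiv.Perm V | g ∈ Γ ∧ g v = v}.Finite)
    (γ₀ : Equiv.Perm V) (hγ₀Γ : γ₀ ∈ Γ)
    (ℓ : ℕ) (hℓpos : 0 < ℓ)
    (hmin : ∀ v : V, ℓ ≤ G.dist v (γ₀ v))
    (hnoinv : ∀ u w : V, ¬(G.Adj u w ∧ γ₀ u = w ∧ γ₀ w = u))
    (Ax : Set V) (hAx : Ax = {v : V | G.dist v (γ₀ v) = ℓ}) (hAxne : Ax.Nonempty)
    (k₀ : ℕ)
    (hk₀ : IsLeast {n : ℕ | ∃ v ∈ Ax, Nat.card {g : Equiv.Perm V // g ∈ Γ ∧ g v = v} = n} k₀)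
    (γ : Equiv.Perm V) (hγΓ : γ ∈ Γ) (hγnot : γ '' Ax ≠ Ax) :
    ∀ x ∈ Ax ∩ γ '' Ax, ∀ y ∈ Ax ∩ γ '' Ax,
      (G.dist x y : ℤ) < (k₀ + 1 : ℤ) * ℓ - 1 := by
  subst hAx
  obtain ⟨w, hw, rfl⟩ := hk₀.1
  let e : MulAction.stabilizer Γ w ≃ {g : Equiv.Perm V // g ∈ Γ ∧ g w = w} :=
    Equiv.subtypeSubtypeEquivSubtypeInter (· ∈ Γ) (· w = w)
  have : Finite (MulAction.stabilizer Γ w) := (hdisc w).to_subtype.of_equiv _ e.symm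
  rw [← Nat.card_congr e]
  exact axis_intersection_length_lt_general (Γ := Γ) G hT (fun g u v ↦ (hΓG g g.2 u v).2) ⟨γ₀, hγ₀Γ⟩
    ℓ ⟨hℓpos, hmin, hAxne, hnoinv⟩ w hw ⟨γ, hγΓ⟩ hγnot
end

section
/- Let φ = [overline{Y}] ∈ F_q((Y⁻¹)) be the root of X² = YX + 1 with |φ| = q. Then the quadratic Lagrange spectrum of φ is exactly Sp(φ) = {0} ∪ {q^{−n−2} : n ∈ N}. -/
open scoped Classical
open Filter

/-- The canonical image of a polynomial `P ∈ 𝔽_q[Y]` in `𝔽_q((Y⁻¹))`, modelled as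
`LaurentSeries F` in the variable `X = Y⁻¹`, so `Y = single (-1) 1`. -/
noncomputable def polyY {F : Type*} [Field F] (P : Polynomial F) : LaurentSeries F :=
  Polynomial.aeval (HahnSeries.single (-1 : ℤ) (1 : F)) P

/-- The nonarchimedean absolute value `|x| = q^{-v(x)}` on `𝔽_q((Y⁻¹))`, where `v` is the
order of vanishing in the variable `Y⁻¹` (and `|0| = 0`). -/
noncomputable def labs {F : Type*} [Field F] [Fintype F] (x : LaurentSeries F) : ℝ :=
  if x = 0 then 0 else (Fintype.card F : ℝ) ^ (-x.order)

/-- The set of pairs `(β, β^σ)` where `β` runs through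
`Θ_α = PGL₂(𝔽_q[Y])·{α, α^σ}` (projective action by homographies) and `β^σ` is the
corresponding Galois conjugate. -/
noncomputable def thetaPairs {F : Type*} [Field F] (α ασ : LaurentSeries F) :
    Set (LaurentSeries F × LaurentSeries F) :=
  {p | ∃ a b c d : Polynomial F, IsUnit (a * d - b * c) ∧
    (p = ((polyY a * α + polyY b) / (polyY c * α + polyY d),
          (polyY a * ασ + polyY b) / (polyY c * ασ + polyY d)) ∨
     p = ((polyY a * ασ + polyY b) / (polyY c * ασ + polyY d),
          (polyY a * α + polyY b) / (polyY c * α + polyY d)))}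

/-- The orbit `Θ_α = PGL₂(𝔽_q[Y])·{α, α^σ}` itself. -/
noncomputable def theta {F : Type*} [Field F] (α ασ : LaurentSeries F) :
    Set (LaurentSeries F) :=
  Prod.fst '' thetaPairs α ασ

/-- The filter expressing `β ∈ Θ_α` with `|β − β^σ| → 0`. -/
noncomputable def thetaFilter {F : Type*} [Field F] [Fintype F] (α ασ : LaurentSeries F) :
    Filter (LaurentSeries F × LaurentSeries F) :=
  Filter.principal (thetaPairs α ασ) ⊓
    Filter.comap (fun p => labs (p.1 - p.2)) (nhds 0)

/-- The quadratic approximation constant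
`c_α(x) = liminf_{β ∈ Θ_α, |β−β^σ|→0} |x−β|/|β−β^σ|`. -/
noncomputable def capprox {F : Type*} [Field F] [Fintype F] (α ασ x : LaurentSeries F) : ℝ :=
  Filter.liminf (fun p => labs (x - p.1) / labs (p.1 - p.2)) (thetaFilter α ασ)

/-- `x` is rational, i.e. belongs to `K = 𝔽_q(Y)` inside `K̂ = 𝔽_q((Y⁻¹))`. -/
def IsRatL {F : Type*} [Field F] (x : LaurentSeries F) : Prop :=
  ∃ r : RatFunc F, (r : LaurentSeries F) = x

/-- The quadratic Lagrange spectrum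
`Sp(α) = {c_α(x) : x ∈ K̂ − (K ∪ Θ_α)}`. -/
noncomputable def quadSpectrum {F : Type*} [Field F] [Fintype F] (α ασ : LaurentSeries F) :
    Set ℝ :=
  {c | ∃ x : LaurentSeries F, ¬ IsRatL x ∧ x ∉ theta α ασ ∧ c = capprox α ασ x}

/-!
For `(β, β^σ)` in the orbit, `|x - β| / |β - β^σ|` is the absolute value of the cross ratio of
`(x, ∞; β, β^σ)`. The steps `z ↦ 1 / (z - aₙ)` of the continued fraction expansion of `x` are
homographies over `𝔽_q[Y]`: they preserve this cross ratio and the orbit, and send `x` and `∞` to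
the complete quotient `tail n` and to the reversed continued fraction `past n`. Orbit pairs do not
follow `x` forever: they reach a pair with `|z| > 1 ≥ |t|`, which has the form
`(uφ + b, uφ^σ + b)` with `u, b ∈ 𝔽_q`, or lose `x` earlier, with ratio at least `q⁻¹`. Hence small
ratios come from the cross ratios of `(tail n, past n; φ, φ^σ)`. These are at most `q⁻²`, and a
maximal run of `k` digits `Y`, between digits `A` and `B`, gives
`|A - Y| / |A| * |B - Y| / |B| * q^(-2 * k - 2)`. If `Y²` alternates with `Y²` or with `Y + 1`, and
runs of `k` digits `Y` separate them, this takes all the values `q^(-n - 2)`; longer and longer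
runs give `0`.
-/

section

open Polynomial
open HahnSeries hiding C

variable {F : Type*} [Field F]

/-! ### Polynomials in `Y` as Laurent series in `Y⁻¹` -/

theorem polyY_zero : polyY (0 : F[X]) = 0 := map_zero _

theorem polyY_one : polyY (1 : F[X]) = 1 := map_one _

theorem polyY_add (P Q : F[X]) : polyY (P + Q) = polyY P + polyY Q := map_add _ _ _

theorem polyY_sub (P Q : F[X]) : polyY (P - Q) = polyY P - polyY Q := map_sub _ _ _

theorem polyY_neg (P : F[X]) : polyY (-P) = -polyY P := map_neg _ _

theorem polyY_mul (P Q : F[X]) : polyY (P * Q) = polyY P * polyY Q := map_mul _ _ _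

theorem polyY_X : polyY (X : F[X]) = single (-1) 1 := aeval_X _

theorem polyY_monomial (n : ℕ) (a : F) : polyY (monomial n a) = single (-n : ℤ) a := by
  rw [polyY, aeval_monomial, HahnSeries.single_pow, HahnSeries.algebraMap_apply']
  simp

theorem coeff_polyY_neg (P : F[X]) (n : ℕ) : (polyY P).coeff (-n) = P.coeff n := by
  induction P using Polynomial.induction_on' with
  | add P Q hP hQ => rw [polyY_add, HahnSeries.coeff_add, hP, hQ, Polynomial.coeff_add]
  | monomial m a =>
    simp only [polyY_monomial, HahnSeries.coeff_single, coeff_monomial, neg_inj, Nat.cast_inj,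
      eq_comm]

theorem polyY_injective : Function.Injective (polyY : F[X] → LaurentSeries F) := fun P Q h => by
  ext n
  rw [← coeff_polyY_neg, h, coeff_polyY_neg]

theorem polyY_eq_zero {P : F[X]} : polyY P = 0 ↔ P = 0 :=
  ⟨fun h => polyY_injective (h.trans polyY_zero.symm), fun h => h ▸ polyY_zero⟩

/-! ### Rational elements -/

open RatFunc in
theorem algebraMap_ratFunc_algebraMap (a : F) :
    algebraMap (RatFunc F) (LaurentSeries F) (algebraMap F (RatFunc F) a) =
      algebraMap F (LaurentSeries F) a := by
  rw [IsScalarTower.algebraMap_apply F F[X] (RatFunc F),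
    ← IsScalarTower.algebraMap_apply F[X] (RatFunc F) (LaurentSeries F),
    HahnSeries.algebraMap_apply', HahnSeries.algebraMap_apply',
    ← IsScalarTower.algebraMap_apply F F[X] (PowerSeries F)]

open RatFunc IntermediateField in
theorem isRatL_iff_exists_div {x : LaurentSeries F} :
    IsRatL x ↔ ∃ A B : F[X], x = polyY A / polyY B := by
  let f : RatFunc F →ₐ[F] LaurentSeries F :=
    { algebraMap (RatFunc F) (LaurentSeries F) with commutes' := algebraMap_ratFunc_algebraMap }
  have f_X : f RatFunc.X = (single (-1) 1)⁻¹ := by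
    rw [HahnSeries.inv_single, neg_neg, inv_one]
    exact RatFunc.coe_X
  have fieldRange_eq : f.fieldRange = F⟮(single (-1) 1 : LaurentSeries F)⟯ := by
    rw [AlgHom.fieldRange_eq_map, ← RatFunc.adjoin_X, adjoin_map, Set.image_singleton, f_X]
    refine le_antisymm (adjoin_simple_le_iff.2 (inv_mem (mem_adjoin_simple_self F _)))
      (adjoin_simple_le_iff.2 ?_)
    simpa using inv_mem (mem_adjoin_simple_self F (single (-1) 1 : LaurentSeries F)⁻¹)
  calc IsRatL x ↔ x ∈ f.fieldRange := Iff.rfl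
    _ ↔ _ := by rw [fieldRange_eq, mem_adjoin_simple_iff]; rfl

theorem isRatL_polyY (P : F[X]) : IsRatL (polyY P) :=
  isRatL_iff_exists_div.2 ⟨P, 1, by rw [polyY_one, div_one]⟩

open RatFunc in
theorem IsRatL.sub {x y : LaurentSeries F} (hx : IsRatL x) (hy : IsRatL y) : IsRatL (x - y) :=
  (algebraMap (RatFunc F) (LaurentSeries F)).fieldRange.sub_mem hx hy

open RatFunc in
theorem IsRatL.mul {x y : LaurentSeries F} (hx : IsRatL x) (hy : IsRatL y) : IsRatL (x * y) :=
  (algebraMap (RatFunc F) (LaurentSeries F)).fieldRange.mul_mem hx hy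

open RatFunc in
theorem IsRatL.inv {x : LaurentSeries F} (hx : IsRatL x) : IsRatL x⁻¹ :=
  (algebraMap (RatFunc F) (LaurentSeries F)).fieldRange.inv_mem hx

/-! ### The Gauss map -/

/-- The Gauss map with prescribed integral part: `z ↦ 1 / (z - P)`. -/
noncomputable def gaussStep (P : F[X]) (z : LaurentSeries F) : LaurentSeries F :=
  (z - polyY P)⁻¹

theorem gaussStep_add_inv (P : F[X]) (z : LaurentSeries F) :
    gaussStep P (polyY P + z⁻¹) = z := by
  rw [gaussStep, add_sub_cancel_left, inv_inv]

theorem add_inv_gaussStep (P : F[X]) (z : LaurentSeries F) :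
    polyY P + (gaussStep P z)⁻¹ = z := by
  rw [gaussStep, inv_inv, add_sub_cancel]

theorem isRatL_gaussStep {P : F[X]} {z : LaurentSeries F} : IsRatL (gaussStep P z) ↔ IsRatL z := by
  refine ⟨fun h => ?_, fun h => (h.sub (isRatL_polyY P)).inv⟩
  simpa [gaussStep, sub_add_cancel, polyY_neg] using h.inv.sub (isRatL_polyY (-P))

theorem sub_polyY_ne_zero {z : LaurentSeries F} (hz : ¬IsRatL z) (P : F[X]) : z - polyY P ≠ 0 :=
  fun h => hz (sub_eq_zero.1 h ▸ isRatL_polyY P)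

/-! ### The orbit of a pair of irrational numbers -/

section ThetaPairs

variable {α α' : LaurentSeries F}

theorem self_mem_thetaPairs : (α, α') ∈ thetaPairs α α' :=
  ⟨1, 0, 0, 1, by simp, .inl (by simp [polyY_one, polyY_zero])⟩

theorem swap_mem_thetaPairs {z t : LaurentSeries F} (h : (z, t) ∈ thetaPairs α α') :
    (t, z) ∈ thetaPairs α α' := by
  obtain ⟨a, b, c, d, hdet, h | h⟩ := h <;> rw [Prod.mk.injEq] at h
  · exact ⟨a, b, c, d, hdet, .inr (Prod.ext h.2 h.1)⟩
  · exact ⟨a, b, c, d, hdet, .inl (Prod.ext h.2 h.1)⟩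

theorem polyY_mul_add_ne_zero (hα : ¬IsRatL α) {a b c d : F[X]} (hdet : IsUnit (a * d - b * c)) :
    polyY c * α + polyY d ≠ 0 := by
  intro h
  rcases eq_or_ne c 0 with rfl | hc
  · rw [polyY_zero, zero_mul, zero_add, polyY_eq_zero] at h
    simp [h] at hdet
  · refine hα (isRatL_iff_exists_div.2 ⟨-d, c, ?_⟩)
    rw [polyY_neg, eq_div_iff (polyY_eq_zero.not.2 hc)]
    linear_combination h

theorem homography_comp {K : Type*} [Field K] (a b c d : K) {m n : K} (hn : n ≠ 0) :
    (a * (m / n) + b) / (c * (m / n) + d) = (a * m + b * n) / (c * m + d * n) := by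
  rw [← mul_div_mul_right _ _ hn]
  congr 1 <;> field_simp

theorem homography_mem_thetaPairs (hα : ¬IsRatL α) (hα' : ¬IsRatL α') {z t : LaurentSeries F}
    (h : (z, t) ∈ thetaPairs α α') {a b c d : F[X]} (hdet : IsUnit (a * d - b * c)) :
    ((polyY a * z + polyY b) / (polyY c * z + polyY d),
      (polyY a * t + polyY b) / (polyY c * t + polyY d)) ∈ thetaPairs α α' := by
  obtain ⟨a', b', c', d', hdet', h⟩ := h
  have comp {x : LaurentSeries F} (hx : ¬IsRatL x) :=
    homography_comp (polyY a) (polyY b) (polyY c) (polyY d) (m := polyY a' * x + polyY b')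
      (polyY_mul_add_ne_zero hx hdet')
  refine ⟨a * a' + b * c', a * b' + b * d', c * a' + d * c', c * b' + d * d', ?_, ?_⟩
  · convert hdet.mul hdet' using 1
    ring
  · refine h.imp ?_ ?_ <;>
    · intro h
      rw [Prod.mk.injEq] at h
      rw [h.1, h.2, comp hα, comp hα']
      simp only [polyY_add, polyY_mul]
      congr 2 <;> ring

theorem gaussStep_mem_thetaPairs (hα : ¬IsRatL α) (hα' : ¬IsRatL α') {z t : LaurentSeries F}
    (h : (z, t) ∈ thetaPairs α α') (P : F[X]) :
    (gaussStep P z, gaussStep P t) ∈ thetaPairs α α' := by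
  convert homography_mem_thetaPairs hα hα' h (a := 0) (b := 1) (c := 1) (d := -P) (by simp) using 2
    <;> simp [gaussStep, polyY_zero, polyY_one, polyY_neg, sub_eq_add_neg]

theorem polyY_add_inv_mem_thetaPairs (hα : ¬IsRatL α) (hα' : ¬IsRatL α') {z t : LaurentSeries F}
    (h : (z, t) ∈ thetaPairs α α') (hz : z ≠ 0) (ht : t ≠ 0) (P : F[X]) :
    (polyY P + z⁻¹, polyY P + t⁻¹) ∈ thetaPairs α α' := by
  have eq_div {w : LaurentSeries F} (hw : w ≠ 0) :
      polyY P + w⁻¹ = (polyY P * w + polyY 1) / (polyY 1 * w + polyY 0) := by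
    rw [polyY_zero, polyY_one, one_mul, add_zero, add_div, mul_div_cancel_right₀ _ hw, one_div]
  rw [eq_div hz, eq_div ht]
  exact homography_mem_thetaPairs hα hα' h (by simp)

theorem exists_mul_eq_of_mem_thetaPairs {T D : F[X]} (hα : ¬IsRatL α) (hα' : ¬IsRatL α')
    (hadd : α + α' = polyY T) (hmul : α * α' = polyY D)
    {z t : LaurentSeries F} (h : (z, t) ∈ thetaPairs α α') :
    ∃ (N e : F[X]) (u : F), N ≠ 0 ∧ u ≠ 0 ∧ polyY N * z = polyY (C u) * α + polyY e ∧
      polyY N * t = polyY (C u) * α' + polyY e := by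
  obtain ⟨a, b, c, d, hdet, h⟩ := h
  have hα0 := polyY_mul_add_ne_zero hα hdet
  have hα'0 := polyY_mul_add_ne_zero hα' hdet
  obtain ⟨u, hu, hdet_eq⟩ := isUnit_iff.1 hdet
  let N := c ^ 2 * D + c * d * T + d ^ 2
  have hN : polyY N = (polyY c * α + polyY d) * (polyY c * α' + polyY d) := by
    simp only [N, polyY_add, polyY_mul, pow_two, ← hadd, ← hmul]
    ring
  have hN0 : N ≠ 0 := by
    refine polyY_eq_zero.not.1 ?_
    rw [hN]
    exact mul_ne_zero hα0 hα'0
  rcases h with h | h <;> rw [Prod.mk.injEq] at h <;> obtain ⟨rfl, rfl⟩ := h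
  · refine ⟨N, a * c * D + b * d + b * c * T, u, hN0, hu.ne_zero, ?_, ?_⟩ <;>
    · rw [hN, hdet_eq]
      simp only [polyY_add, polyY_sub, polyY_mul, ← hadd, ← hmul]
      field_simp
      ring
  · refine ⟨N, a * c * D + b * d + a * d * T, -u, hN0, neg_ne_zero.2 hu.ne_zero, ?_, ?_⟩ <;>
    · rw [hN, C_neg, hdet_eq]
      simp only [polyY_add, polyY_sub, polyY_neg, polyY_mul, ← hadd, ← hmul]
      field_simp
      ring

theorem not_isRatL_of_mem_thetaPairs {T D : F[X]} (hα : ¬IsRatL α) (hα' : ¬IsRatL α')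
    (hadd : α + α' = polyY T) (hmul : α * α' = polyY D)
    {z t : LaurentSeries F} (h : (z, t) ∈ thetaPairs α α') : ¬IsRatL z := by
  obtain ⟨N, e, u, -, hu, hz, -⟩ := exists_mul_eq_of_mem_thetaPairs hα hα' hadd hmul h
  intro hrat
  refine hα ?_
  have hu0 : polyY (C u) ≠ 0 := polyY_eq_zero.not.2 (C_ne_zero.2 hu)
  have α_eq : α = (polyY N * z - polyY e) * (polyY (C u))⁻¹ := by
    rw [hz, add_sub_cancel_right, mul_comm, inv_mul_cancel_left₀ hu0]
  rw [α_eq]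
  exact (((isRatL_polyY N).mul hrat).sub (isRatL_polyY e)).mul (isRatL_polyY _).inv

end ThetaPairs

/-! ### The absolute value -/

variable [Fintype F]

/-- The order `q` of the finite field, as a real number. -/
local notation "q" => (Fintype.card F : ℝ)

theorem one_lt_q : 1 < q := mod_cast Fintype.one_lt_card

theorem q_pos : 0 < q := zero_lt_one.trans one_lt_q

theorem labs_of_ne_zero {x : LaurentSeries F} (hx : x ≠ 0) : labs x = q ^ (-x.order) := if_neg hx

theorem labs_le_zpow_iff {x : LaurentSeries F} {m : ℤ} :
    labs x ≤ q ^ (-m) ↔ ∀ k < m, x.coeff k = 0 := by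
  rcases eq_or_ne x 0 with rfl | hx
  · simpa [labs] using zpow_nonneg q_pos.le _
  · rw [labs_of_ne_zero hx, zpow_le_zpow_iff_right₀ one_lt_q, neg_le_neg_iff,
      HahnSeries.le_order_iff_forall hx]

theorem labs_nonneg (x : LaurentSeries F) : 0 ≤ labs x := by
  unfold labs
  positivity

theorem isNonarchimedean_labs : IsNonarchimedean (labs : LaurentSeries F → ℝ) := fun x y => by
  rcases eq_or_ne x 0 with rfl | hx
  · simp
  rcases eq_or_ne y 0 with rfl | hy
  · simp
  have labs_add_le : ∀ m : ℤ, labs x ≤ q ^ (-m) → labs y ≤ q ^ (-m) → labs (x + y) ≤ q ^ (-m) := by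
    simp only [labs_le_zpow_iff, HahnSeries.coeff_add]
    exact fun m hx hy k hk => by rw [hx k hk, hy k hk, add_zero]
  rcases le_total (labs x) (labs y) with h | h
  · rw [max_eq_right h, labs_of_ne_zero hy]
    exact labs_add_le _ (labs_of_ne_zero hy ▸ h) (labs_of_ne_zero hy).le
  · rw [max_eq_left h, labs_of_ne_zero hx]
    exact labs_add_le _ (labs_of_ne_zero hx).le (labs_of_ne_zero hx ▸ h)

/-- `labs` as a bundled absolute value. -/
noncomputable def labsAbv (F : Type*) [Field F] [Fintype F] :
    AbsoluteValue (LaurentSeries F) ℝ where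
  toFun := labs
  map_mul' x y := by
    rcases eq_or_ne x 0 with rfl | hx
    · simp [labs]
    rcases eq_or_ne y 0 with rfl | hy
    · simp [labs]
    rw [labs_of_ne_zero hx, labs_of_ne_zero hy, labs_of_ne_zero (mul_ne_zero hx hy),
      HahnSeries.order_mul hx hy, neg_add, zpow_add₀ q_pos.ne']
  nonneg' := labs_nonneg
  eq_zero' x := by
    rcases eq_or_ne x 0 with rfl | hx
    · simp [labs]
    · simp [hx, labs_of_ne_zero hx, zpow_ne_zero _ q_pos.ne']
  add_le' x y := isNonarchimedean_labs.add_le labs_nonneg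

theorem labs_zero : labs (0 : LaurentSeries F) = 0 := map_zero (labsAbv F)

theorem labs_one : labs (1 : LaurentSeries F) = 1 := map_one (labsAbv F)

theorem labs_mul (x y : LaurentSeries F) : labs (x * y) = labs x * labs y :=
  map_mul (labsAbv F) x y

theorem labs_inv (x : LaurentSeries F) : labs x⁻¹ = (labs x)⁻¹ := map_inv₀ (labsAbv F) x

theorem labs_div (x y : LaurentSeries F) : labs (x / y) = labs x / labs y :=
  map_div₀ (labsAbv F) x y

theorem labs_neg (x : LaurentSeries F) : labs (-x) = labs x := (labsAbv F).map_neg x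

theorem labs_sub_comm (x y : LaurentSeries F) : labs (x - y) = labs (y - x) :=
  (labsAbv F).map_sub x y

theorem labs_pos {x : LaurentSeries F} : 0 < labs x ↔ x ≠ 0 := (labsAbv F).pos_iff

theorem labs_add_eq_right {x y : LaurentSeries F} (h : labs x < labs y) :
    labs (x + y) = labs y :=
  isNonarchimedean_labs.add_eq_right_of_lt (f := labsAbv F) h

theorem labs_add_eq_left {x y : LaurentSeries F} (h : labs y < labs x) :
    labs (x + y) = labs x :=
  isNonarchimedean_labs.add_eq_left_of_lt (f := labsAbv F) h

theorem labs_sub_eq_right {x y : LaurentSeries F} (h : labs x < labs y) :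
    labs (x - y) = labs y := by
  rw [sub_eq_add_neg, labs_add_eq_right (by rwa [labs_neg]), labs_neg]

theorem labs_sub_eq_left {x y : LaurentSeries F} (h : labs y < labs x) :
    labs (x - y) = labs x := by
  rw [labs_sub_comm, labs_sub_eq_right h]

theorem labs_sub_le_max (x y : LaurentSeries F) : labs (x - y) ≤ max (labs x) (labs y) := by
  simpa only [sub_eq_add_neg, labs_neg] using isNonarchimedean_labs x (-y)

theorem labs_inv_sub_inv {x y : LaurentSeries F} (hx : x ≠ 0) (hy : y ≠ 0) :
    labs (x⁻¹ - y⁻¹) = labs (x - y) / (labs x * labs y) := by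
  rw [inv_sub_inv hx hy, labs_div, labs_mul, labs_sub_comm]

theorem ne_zero_of_one_lt_labs {x : LaurentSeries F} (hx : 1 < labs x) : x ≠ 0 :=
  labs_pos.1 (zero_lt_one.trans hx)

theorem zpow_lt_labs_iff {x : LaurentSeries F} {m : ℤ} : q ^ m < labs x ↔ q ^ (m + 1) ≤ labs x := by
  rcases eq_or_ne x 0 with rfl | hx
  · simp only [labs_zero, (zpow_pos q_pos _).not_ge, (zpow_pos q_pos _).not_gt]
  · rw [labs_of_ne_zero hx, zpow_lt_zpow_iff_right₀ one_lt_q, zpow_le_zpow_iff_right₀ one_lt_q,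
      Int.add_one_le_iff]

theorem one_lt_labs_iff {x : LaurentSeries F} : 1 < labs x ↔ q ≤ labs x := by
  simpa using zpow_lt_labs_iff (x := x) (m := 0)

theorem labs_lt_one_iff {x : LaurentSeries F} : labs x < 1 ↔ labs x ≤ q⁻¹ := by
  simpa using (zpow_lt_labs_iff (x := x) (m := -1)).not.symm

theorem labs_inv_lt_one {x : LaurentSeries F} (hx : 1 < labs x) : labs x⁻¹ < 1 :=
  (labs_inv x).trans_lt (inv_lt_one_of_one_lt₀ hx)

theorem labs_inv_sub_inv_le {x y : LaurentSeries F} (hx : 1 < labs x) (hy : 1 ≤ labs y) :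
    labs (x⁻¹ - y⁻¹) ≤ labs (x - y) / q := by
  rw [labs_inv_sub_inv (ne_zero_of_one_lt_labs hx) (labs_pos.1 (one_pos.trans_le hy))]
  refine div_le_div_of_nonneg_left (labs_nonneg _) q_pos ?_
  exact (one_lt_labs_iff.1 hx).trans (le_mul_of_one_le_right (labs_nonneg _) hy)

theorem eq_zero_of_forall_labs_le {x : LaurentSeries F} (h : ∀ n : ℕ, labs x ≤ q ^ (-n : ℤ)) :
    x = 0 := by
  ext k
  exact labs_le_zpow_iff.1 (h (k.natAbs + 1)) k (by lia)

theorem exists_labs_sub_le_of_cauchy {u : ℕ → LaurentSeries F}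
    (hu : ∀ n : ℕ, labs (u (n + 1) - u n) ≤ q ^ (-(n + 1) : ℤ)) :
    ∃ t, ∀ n : ℕ, labs (t - u n) ≤ q ^ (-(n + 1) : ℤ) := by
  have coeff_eq {n m : ℕ} (hnm : n ≤ m) {k : ℤ} (hk : k < n + 1) :
      (u m).coeff k = (u n).coeff k := by
    induction m, hnm using Nat.le_induction with
    | base => rfl
    | succ m hnm ih =>
      rw [← ih, ← sub_eq_zero, ← HahnSeries.coeff_sub]
      exact labs_le_zpow_iff.1 (hu m) k (by lia)
  have bddBelow : BddBelow (Function.support fun k : ℤ => (u k.toNat).coeff k) := by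
    refine ⟨min 0 (u 0).order, fun k hk => ?_⟩
    by_contra! hlt
    rw [lt_min_iff] at hlt
    rw [Function.mem_support, Int.toNat_of_nonpos hlt.1.le] at hk
    exact hk (coeff_eq_zero_of_lt_order hlt.2)
  refine ⟨ofSuppBddBelow _ bddBelow, fun n => labs_le_zpow_iff.2 fun k hk => ?_⟩
  rw [HahnSeries.coeff_sub, coeff_ofSuppBddBelow, sub_eq_zero]
  exact (coeff_eq (by lia) (by lia)).symm

theorem labs_polyY {P : F[X]} (hP : P ≠ 0) : labs (polyY P) = q ^ P.natDegree := by
  refine le_antisymm ?_ ?_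
  · rw [← zpow_natCast, ← neg_neg (P.natDegree : ℤ), labs_le_zpow_iff]
    intro k hk
    obtain ⟨n, rfl⟩ : ∃ n : ℕ, k = -n := ⟨k.natAbs, by lia⟩
    rw [coeff_polyY_neg, coeff_eq_zero_of_natDegree_lt (by lia)]
  · by_contra! hlt
    have hle : labs (polyY P) ≤ q ^ (-(1 - P.natDegree) : ℤ) := by
      rw [← not_lt, zpow_lt_labs_iff]
      simpa using hlt
    have := labs_le_zpow_iff.1 hle (-P.natDegree) (by lia)
    exact leadingCoeff_ne_zero.2 hP (by rwa [coeff_polyY_neg] at this)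

theorem labs_polyY_le (P : F[X]) : labs (polyY P) ≤ q ^ P.natDegree := by
  rcases eq_or_ne P 0 with rfl | hP
  · exact polyY_zero (F := F) ▸ labs_zero.trans_le (pow_nonneg q_pos.le _)
  · exact (labs_polyY hP).le

theorem one_le_labs_polyY {P : F[X]} (hP : P ≠ 0) : 1 ≤ labs (polyY P) := by
  rw [labs_polyY hP]
  exact one_le_pow₀ one_lt_q.le

theorem one_lt_labs_polyY_iff {P : F[X]} : 1 < labs (polyY P) ↔ 0 < P.natDegree := by
  rcases eq_or_ne P 0 with rfl | hP
  · simp [polyY_zero, labs_zero]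
  · rw [labs_polyY hP, Nat.pos_iff_ne_zero]
    exact ⟨fun h h0 => by simp [h0] at h, one_lt_pow₀ one_lt_q⟩

theorem one_lt_labs_polyY_add {P : F[X]} (hP : 0 < P.natDegree) {t : LaurentSeries F}
    (ht : labs t < 1) : 1 < labs (polyY P + t) := by
  have := one_lt_labs_polyY_iff.2 hP
  rwa [labs_add_eq_left (ht.trans this)]

theorem labs_polyY_C {a : F} (ha : a ≠ 0) : labs (polyY (C a)) = 1 := by
  rw [labs_polyY (C_ne_zero.2 ha), natDegree_C, pow_zero]

theorem exists_labs_sub_polyY_lt_one (x : LaurentSeries F) :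
    ∃ P : F[X], labs (x - polyY P) < 1 := by
  set N := x.order.natAbs + 1
  let P : F[X] := ∑ i ∈ Finset.range N, monomial i (x.coeff (-i))
  have coeff_P : ∀ n, P.coeff n = x.coeff (-n) := fun n => by
    simp only [P, finsetSum_coeff, coeff_monomial, Finset.sum_ite_eq', Finset.mem_range]
    split_ifs with hn
    · rfl
    · exact (HahnSeries.coeff_eq_zero_of_lt_order (by lia)).symm
  refine ⟨P, labs_lt_one_iff.2 ?_⟩
  rw [← zpow_neg_one, labs_le_zpow_iff]
  intro k hk
  obtain ⟨n, rfl⟩ : ∃ n : ℕ, k = -n := ⟨k.natAbs, by lia⟩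
  rw [HahnSeries.coeff_sub, coeff_polyY_neg, coeff_P, sub_self]

theorem labs_gaussStep_sub_gaussStep {P : F[X]} {z t : LaurentSeries F} (hz : z - polyY P ≠ 0)
    (ht : t - polyY P ≠ 0) :
    labs (gaussStep P z - gaussStep P t) =
      labs (z - t) * (labs (gaussStep P z) * labs (gaussStep P t)) := by
  rw [gaussStep, gaussStep, labs_inv_sub_inv hz ht, sub_sub_sub_cancel_right, labs_inv, labs_inv,
    ← mul_inv, div_eq_mul_inv]

/-! ### Cross ratios -/

/-- The absolute value of the cross ratio of `(x, y; z, t)`. -/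
noncomputable def crossRatio (x y z t : LaurentSeries F) : ℝ :=
  labs (x - z) * labs (y - t) / (labs (x - y) * labs (z - t))

theorem crossRatio_gaussStep {P : F[X]} {x y z t : LaurentSeries F} (hx : x - polyY P ≠ 0)
    (hy : y - polyY P ≠ 0) (hz : z - polyY P ≠ 0) (ht : t - polyY P ≠ 0) :
    crossRatio (gaussStep P x) (gaussStep P y) (gaussStep P z) (gaussStep P t) =
      crossRatio x y z t := by
  simp only [crossRatio, gaussStep]
  rw [labs_inv_sub_inv hx hz, labs_inv_sub_inv hy ht, labs_inv_sub_inv hx hy,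
    labs_inv_sub_inv hz ht]
  simp only [sub_sub_sub_cancel_right]
  rw [← labs_pos] at hx hy hz ht
  field_simp

/-- The point `0 = 1 / (∞ - P)` is the image of `∞` under the Gauss map. -/
theorem crossRatio_gaussStep_zero {P : F[X]} {x z t : LaurentSeries F} (hx : x - polyY P ≠ 0)
    (hz : z - polyY P ≠ 0) (ht : t - polyY P ≠ 0) :
    crossRatio (gaussStep P x) 0 (gaussStep P z) (gaussStep P t) = labs (x - z) / labs (z - t) := by
  simp only [crossRatio, gaussStep]
  rw [labs_inv_sub_inv hx hz, labs_inv_sub_inv hz ht]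
  simp only [sub_sub_sub_cancel_right, sub_zero, zero_sub, labs_neg, labs_inv]
  rw [← labs_pos] at hx hz ht
  field_simp

/-! ### Continued fractions -/

/-- The finite continued fraction `1 / (P n + 1 / (P (n + 1) + ⋯))` with the `N` digits
`P n, …, P (n + N - 1)`. -/
noncomputable def convergent (P : ℕ → F[X]) : ℕ → ℕ → LaurentSeries F
  | 0, _ => 0
  | N + 1, n => (polyY (P n) + convergent P N (n + 1))⁻¹

theorem labs_convergent_lt_one {P : ℕ → F[X]} (hP : ∀ n, 0 < (P n).natDegree) (N n : ℕ) :
    labs (convergent P N n) < 1 := by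
  induction N generalizing n with
  | zero => exact labs_zero.trans_lt one_pos
  | succ N ih => exact labs_inv_lt_one (one_lt_labs_polyY_add (hP n) (ih _))

theorem labs_convergent_succ_sub_le {P : ℕ → F[X]} (hP : ∀ n, 0 < (P n).natDegree) (N n : ℕ) :
    labs (convergent P (N + 1) n - convergent P N n) ≤ q ^ (-(N + 1) : ℤ) := by
  induction N generalizing n with
  | zero =>
    simpa [convergent] using labs_lt_one_iff.1 (labs_convergent_lt_one hP 1 n)
  | succ N ih =>
    refine (labs_inv_sub_inv_le (one_lt_labs_polyY_add (hP n) (labs_convergent_lt_one hP _ _))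
      (one_lt_labs_polyY_add (hP n) (labs_convergent_lt_one hP _ _)).le).trans ?_
    rw [add_sub_add_left_eq_sub, div_le_iff₀ q_pos, ← zpow_add_one₀ q_pos.ne']
    simpa using ih (n + 1)

/-- A continued fraction expansion `x = floor + 1 / (digit 0 + 1 / (digit 1 + ⋯))`, given by its
digits and its complete quotients `tail n = digit n + 1 / (digit (n + 1) + ⋯)`. -/
structure ContFrac (x : LaurentSeries F) where
  floor : F[X]
  digit : ℕ → F[X]
  tail : ℕ → LaurentSeries F
  eq_floor_add : x = polyY floor + (tail 0)⁻¹
  tail_eq : ∀ n, tail n = polyY (digit n) + (tail (n + 1))⁻¹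
  one_lt_labs_tail : ∀ n, 1 < labs (tail n)

namespace ContFrac

variable {x : LaurentSeries F} (c : ContFrac x)

theorem tail_ne_zero (n : ℕ) : c.tail n ≠ 0 := ne_zero_of_one_lt_labs (c.one_lt_labs_tail n)

theorem tail_sub_digit (n : ℕ) : c.tail n - polyY (c.digit n) = (c.tail (n + 1))⁻¹ := by
  rw [c.tail_eq n, add_sub_cancel_left]

theorem tail_sub_digit_ne_zero (n : ℕ) : c.tail n - polyY (c.digit n) ≠ 0 :=
  c.tail_sub_digit n ▸ inv_ne_zero (c.tail_ne_zero _)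

theorem gaussStep_tail (n : ℕ) : gaussStep (c.digit n) (c.tail n) = c.tail (n + 1) := by
  rw [gaussStep, tail_sub_digit, inv_inv]

theorem labs_digit (n : ℕ) : labs (polyY (c.digit n)) = labs (c.tail n) := by
  rw [← sub_eq_of_eq_add (c.tail_eq n), labs_sub_eq_left]
  exact (labs_inv_lt_one (c.one_lt_labs_tail _)).trans (c.one_lt_labs_tail n)

theorem one_lt_labs_digit (n : ℕ) : 1 < labs (polyY (c.digit n)) :=
  c.labs_digit n ▸ c.one_lt_labs_tail n

theorem natDegree_digit_pos (n : ℕ) : 0 < (c.digit n).natDegree :=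
  one_lt_labs_polyY_iff.1 (c.one_lt_labs_digit n)

theorem digit_ne_zero (n : ℕ) : c.digit n ≠ 0 := ne_zero_of_natDegree_gt (c.natDegree_digit_pos n)

theorem not_isRatL_tail (n : ℕ) : ¬IsRatL (c.tail n) := by
  -- Euclid's algorithm: `B * tail n = A` gives `R * tail (n + 1) = B` with `R = A - B * digit n`.
  have descent : ∀ (B A : F[X]) (n : ℕ), polyY B * c.tail n = polyY A → B = 0 := by
    intro B
    induction hd : B.natDegree using Nat.strong_induction_on generalizing B with
    | _ d ih =>
      intro A n h
      by_contra hB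
      have hR : polyY (A - B * c.digit n) * c.tail (n + 1) = polyY B := by
        rw [polyY_sub, polyY_mul, ← h, ← mul_sub, tail_sub_digit, mul_assoc,
          inv_mul_cancel₀ (c.tail_ne_zero _), mul_one]
      have hR0 : A - B * c.digit n ≠ 0 := fun h0 => by
        rw [h0, polyY_zero, zero_mul, eq_comm, polyY_eq_zero] at hR
        exact hB hR
      refine hR0 (ih _ ?_ _ rfl B (n + 1) hR)
      rw [← hd, ← pow_lt_pow_iff_right₀ (one_lt_q (F := F)), ← labs_polyY hR0, ← labs_polyY hB,
        ← hR, labs_mul]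
      exact lt_mul_of_one_lt_right (labs_pos.2 (polyY_eq_zero.not.2 hR0)) (c.one_lt_labs_tail _)
  intro hrat
  obtain ⟨A, B, h⟩ := isRatL_iff_exists_div.1 hrat
  have hB : polyY B ≠ 0 := fun h0 => c.tail_ne_zero n (by rw [h, h0, div_zero])
  exact hB (polyY_eq_zero.2 (descent B A n (by rw [h, mul_div_cancel₀ _ hB])))

theorem not_isRatL (c : ContFrac x) : ¬IsRatL x := fun hx =>
  c.not_isRatL_tail 0 <| by
    rwa [c.eq_floor_add, ← isRatL_gaussStep (P := c.floor), gaussStep_add_inv] at hx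

theorem nonempty_of_not_isRatL (hx : ¬IsRatL x) : Nonempty (ContFrac x) := by
  choose P hP using exists_labs_sub_polyY_lt_one (F := F)
  let gauss z := gaussStep (P z) z
  have not_isRatL_iterate : ∀ n, ¬IsRatL (gauss^[n] x) := fun n => by
    induction n with
    | zero => exact hx
    | succ n ih =>
      rw [Function.iterate_succ_apply']
      exact isRatL_gaussStep.not.2 ih
  refine ⟨⟨P x, fun n => P (gauss^[n + 1] x), fun n => gauss^[n + 1] x, ?_, fun n => ?_,
    fun n => ?_⟩⟩
  · exact (add_inv_gaussStep _ _).symm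
  · rw [Function.iterate_succ_apply' _ (n + 1)]
    exact (add_inv_gaussStep _ _).symm
  · rw [Function.iterate_succ_apply', show gauss = fun z => gaussStep (P z) z from rfl]
    simp only [gaussStep, labs_inv]
    exact (one_lt_inv₀ (labs_pos.2 (sub_polyY_ne_zero (not_isRatL_iterate n) _))).2 (hP _)

theorem tail_eq_of_digit_eq {y : LaurentSeries F} {c : ContFrac x} {d : ContFrac y} {m n : ℕ}
    (h : ∀ k, c.digit (m + k) = d.digit (n + k)) : c.tail m = d.tail n := by
  rw [← sub_eq_zero]
  refine eq_zero_of_forall_labs_le fun j => ?_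
  have sub_eq : ∀ {m n : ℕ}, (∀ k, c.digit (m + k) = d.digit (n + k)) →
      c.tail m - d.tail n = (c.tail (m + 1))⁻¹ - (d.tail (n + 1))⁻¹ := fun h => by
    rw [c.tail_eq, d.tail_eq, show c.digit _ = d.digit _ by simpa using h 0,
      add_sub_add_left_eq_sub]
  induction j generalizing m n with
  | zero =>
    rw [sub_eq h, Nat.cast_zero, neg_zero, zpow_zero]
    exact (labs_sub_le_max _ _).trans (max_le (labs_inv_lt_one (c.one_lt_labs_tail _)).le
      (labs_inv_lt_one (d.one_lt_labs_tail _)).le)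
  | succ j ih =>
    rw [sub_eq h]
    refine (labs_inv_sub_inv_le (c.one_lt_labs_tail _) (d.one_lt_labs_tail _).le).trans ?_
    rw [div_le_iff₀ q_pos, ← zpow_add_one₀ q_pos.ne', Nat.cast_succ, neg_add, neg_add_cancel_right]
    exact ih fun k => by rw [add_assoc, add_assoc, h]

theorem exists_digit_eq {P : ℕ → F[X]} (hP : ∀ n, 0 < (P n).natDegree) :
    ∃ x, ∃ c : ContFrac x, c.digit = P := by
  choose t ht using fun n => exists_labs_sub_le_of_cauchy (u := (convergent P · n))
    (labs_convergent_succ_sub_le hP · n)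
  have t_lt_one (n : ℕ) : labs (t n) < 1 := labs_lt_one_iff.2 <| by
    simpa [convergent] using ht n 0
  have t_eq (n : ℕ) : t n = (polyY (P n) + t (n + 1))⁻¹ := by
    refine sub_eq_zero.1 (eq_zero_of_forall_labs_le fun N => ?_)
    rw [← sub_sub_sub_cancel_right _ _ (convergent P (N + 1) n)]
    refine (labs_sub_le_max _ _).trans (max_le ?_ ?_)
    · exact (ht n (N + 1)).trans (zpow_le_zpow_right₀ one_lt_q.le (by lia))
    · refine (labs_inv_sub_inv_le (one_lt_labs_polyY_add (hP n) (t_lt_one _))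
        (one_lt_labs_polyY_add (hP n) (labs_convergent_lt_one hP _ _)).le).trans ?_
      rw [add_sub_add_left_eq_sub]
      refine (div_le_self (labs_nonneg _) one_lt_q.le).trans ((ht (n + 1) N).trans ?_)
      exact zpow_le_zpow_right₀ one_lt_q.le (by lia)
  refine ⟨t 0, ⟨0, P, fun n => polyY (P n) + t (n + 1), ?_, fun n => ?_, fun n => ?_⟩, rfl⟩
  · rw [← t_eq, polyY_zero, zero_add]
  · rw [← t_eq]
  · exact one_lt_labs_polyY_add (hP n) (t_lt_one _)

/-- The orbit of the point at infinity under the Gauss steps of the expansion, starting from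
its first image `0`: `past n = 1 / (-digit (n - 1) + 1 / (-digit (n - 2) + ⋯))`. -/
noncomputable def past : ℕ → LaurentSeries F
  | 0 => 0
  | n + 1 => gaussStep (c.digit n) (past n)

/-- The orbit of `z` under the Gauss steps of the expansion of `x`. -/
noncomputable def trajectory (z : LaurentSeries F) : ℕ → LaurentSeries F
  | 0 => gaussStep c.floor z
  | n + 1 => gaussStep (c.digit n) (trajectory z n)

/-- The point whose `n`-th `trajectory` point is `w`. -/
noncomputable def pullback : ℕ → LaurentSeries F → LaurentSeries F
  | 0, w => polyY c.floor + w⁻¹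
  | n + 1, w => pullback n (polyY (c.digit n) + w⁻¹)

theorem trajectory_self (n : ℕ) : c.trajectory x n = c.tail n := by
  induction n with
  | zero =>
    rw [trajectory]
    nth_rw 2 [c.eq_floor_add]
    exact gaussStep_add_inv _ _
  | succ n ih => rw [trajectory, ih, gaussStep_tail]

theorem trajectory_pullback (n : ℕ) (w : LaurentSeries F) :
    c.trajectory (c.pullback n w) n = w := by
  induction n generalizing w with
  | zero => exact gaussStep_add_inv _ _
  | succ n ih => rw [trajectory, pullback, ih, gaussStep_add_inv]

theorem pullback_tail (n : ℕ) : c.pullback n (c.tail n) = x := by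
  induction n with
  | zero => exact c.eq_floor_add.symm
  | succ n ih => rw [pullback, ← c.tail_eq, ih]

theorem labs_past_lt_one (n : ℕ) : labs (c.past n) < 1 := by
  induction n with
  | zero => exact labs_zero.trans_lt one_pos
  | succ n ih =>
    have := c.one_lt_labs_digit n
    exact labs_inv_lt_one (by rwa [labs_sub_eq_right (ih.trans this)])

theorem labs_past_sub_digit (n : ℕ) : labs (c.past n - polyY (c.digit n)) = labs (c.tail n) := by
  rw [labs_sub_eq_right ((c.labs_past_lt_one n).trans (c.one_lt_labs_digit n)), labs_digit]

theorem past_sub_digit_ne_zero (n : ℕ) : c.past n - polyY (c.digit n) ≠ 0 :=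
  labs_pos.1 (c.labs_past_sub_digit n ▸ labs_pos.2 (c.tail_ne_zero n))

theorem labs_tail_sub_past (n : ℕ) : labs (c.tail n - c.past n) = labs (c.tail n) :=
  labs_sub_eq_left ((c.labs_past_lt_one n).trans (c.one_lt_labs_tail n))

theorem crossRatio_step (n : ℕ) {z t : LaurentSeries F} (hz : z - polyY (c.digit n) ≠ 0)
    (ht : t - polyY (c.digit n) ≠ 0) :
    crossRatio (c.tail (n + 1)) (c.past (n + 1)) (gaussStep (c.digit n) z)
      (gaussStep (c.digit n) t) = crossRatio (c.tail n) (c.past n) z t := by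
  rw [← gaussStep_tail, past,
    crossRatio_gaussStep (c.tail_sub_digit_ne_zero n) (c.past_sub_digit_ne_zero n) hz ht]

theorem not_isRatL_trajectory {z : LaurentSeries F} (hz : ¬IsRatL z) (n : ℕ) :
    ¬IsRatL (c.trajectory z n) := by
  induction n with
  | zero => exact isRatL_gaussStep.not.2 hz
  | succ n ih => exact isRatL_gaussStep.not.2 ih

/-- The Gauss steps preserve the cross ratio of `(x, ∞; z, t)`. -/
theorem crossRatio_trajectory {z t : LaurentSeries F} (hz : ¬IsRatL z) (ht : ¬IsRatL t) (n : ℕ) :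
    crossRatio (c.tail n) (c.past n) (c.trajectory z n) (c.trajectory t n) =
      labs (x - z) / labs (z - t) := by
  induction n with
  | zero =>
    rw [← c.trajectory_self]
    exact crossRatio_gaussStep_zero (sub_polyY_ne_zero c.not_isRatL _) (sub_polyY_ne_zero hz _)
      (sub_polyY_ne_zero ht _)
  | succ n ih =>
    rw [← ih]
    exact c.crossRatio_step n (sub_polyY_ne_zero (c.not_isRatL_trajectory hz n) _)
      (sub_polyY_ne_zero (c.not_isRatL_trajectory ht n) _)

end ContFrac

/-! ### The golden ratio and its orbit -/

/-- The golden ratio `φ = [Y; Y, Y, …]` and its Galois conjugate `φ'`: the two roots of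
`Z² = Y Z + 1`, of which `φ` is the one of absolute value `q`. -/
structure IsGoldenPair (φ φ' : LaurentSeries F) : Prop where
  add_eq : φ + φ' = polyY X
  mul_eq : φ * φ' = -1
  labs_eq : labs φ = q

namespace IsGoldenPair

variable {φ φ' z t : LaurentSeries F} (h : IsGoldenPair φ φ')

include h

theorem one_lt_labs : 1 < labs φ := h.labs_eq ▸ one_lt_q

theorem labs_conj : labs φ' = q⁻¹ := by
  refine eq_inv_of_mul_eq_one_right ?_
  rw [← h.labs_eq, ← labs_mul, h.mul_eq, labs_neg, labs_one]

theorem labs_conj_lt_one : labs φ' < 1 := h.labs_conj ▸ inv_lt_one_of_one_lt₀ one_lt_q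

theorem labs_sub_conj : labs (φ - φ') = q := by
  rw [labs_sub_eq_left (h.labs_conj_lt_one.trans h.one_lt_labs), h.labs_eq]

theorem inv_eq : φ⁻¹ = -φ' :=
  inv_eq_of_mul_eq_one_right (by rw [mul_neg, h.mul_eq, neg_neg])

theorem gaussStep_X : gaussStep X φ = φ := by
  rw [gaussStep, ← h.add_eq, sub_add_cancel_left, ← h.inv_eq, inv_inv]

theorem gaussStep_X_conj : gaussStep X φ' = φ' := by
  rw [gaussStep, ← h.add_eq, sub_add_cancel_right, inv_neg, h.inv_eq, neg_neg]

/-- The continued fraction expansion `[Y; Y, Y, …]` of the golden ratio. -/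
noncomputable def contFrac : ContFrac φ where
  floor := X
  digit _ := X
  tail _ := φ
  eq_floor_add := by rw [h.inv_eq, ← h.add_eq, add_neg_cancel_right]
  tail_eq _ := by rw [h.inv_eq, ← h.add_eq, add_neg_cancel_right]
  one_lt_labs_tail _ := h.one_lt_labs

theorem not_isRatL : ¬IsRatL φ := h.contFrac.not_isRatL

theorem not_isRatL_conj : ¬IsRatL φ' := fun hφ' => h.not_isRatL <| by
  rw [eq_sub_of_add_eq h.add_eq]
  exact (isRatL_polyY X).sub hφ'

theorem exists_mul_eq (hzt : (z, t) ∈ thetaPairs φ φ') :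
    ∃ (N e : F[X]) (u : F), N ≠ 0 ∧ u ≠ 0 ∧ polyY N * z = polyY (C u) * φ + polyY e ∧
      polyY N * t = polyY (C u) * φ' + polyY e :=
  exists_mul_eq_of_mem_thetaPairs h.not_isRatL h.not_isRatL_conj h.add_eq
    (h.mul_eq.trans (by rw [polyY_neg, polyY_one] : (-1 : LaurentSeries F) = polyY (-1))) hzt

theorem not_isRatL_of_mem (hzt : (z, t) ∈ thetaPairs φ φ') : ¬IsRatL z :=
  not_isRatL_of_mem_thetaPairs h.not_isRatL h.not_isRatL_conj h.add_eq
    (h.mul_eq.trans (by rw [polyY_neg, polyY_one] : (-1 : LaurentSeries F) = polyY (-1))) hzt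

theorem not_isRatL_conj_of_mem (hzt : (z, t) ∈ thetaPairs φ φ') : ¬IsRatL t :=
  h.not_isRatL_of_mem (swap_mem_thetaPairs hzt)

theorem labs_mul_labs_sub {N e : F[X]} {u : F} (hu : u ≠ 0)
    (hz : polyY N * z = polyY (C u) * φ + polyY e)
    (ht : polyY N * t = polyY (C u) * φ' + polyY e) : labs (polyY N) * labs (z - t) = q := by
  rw [← labs_mul, mul_sub, hz, ht, add_sub_add_right_eq_sub, ← mul_sub, labs_mul, labs_polyY_C hu,
    one_mul, h.labs_sub_conj]

theorem labs_sub_pos_of_mem (hzt : (z, t) ∈ thetaPairs φ φ') : 0 < labs (z - t) := by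
  obtain ⟨N, e, u, -, hu, hz, ht⟩ := h.exists_mul_eq hzt
  refine (labs_nonneg _).lt_of_ne fun h0 => (q_pos (F := F)).ne ?_
  rw [← h.labs_mul_labs_sub hu hz ht, ← h0, mul_zero]

theorem labs_sub_le_of_mem (hzt : (z, t) ∈ thetaPairs φ φ') : labs (z - t) ≤ q := by
  obtain ⟨N, e, u, hN, hu, hz, ht⟩ := h.exists_mul_eq hzt
  rw [← h.labs_mul_labs_sub hu hz ht]
  exact le_mul_of_one_le_left (labs_nonneg _) (one_le_labs_polyY hN)

theorem exists_eq_of_one_lt_labs_of_labs_le_one (hzt : (z, t) ∈ thetaPairs φ φ')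
    (hz1 : 1 < labs z) (ht1 : labs t ≤ 1) :
    ∃ u b : F, u ≠ 0 ∧ z = polyY (C u) * φ + polyY (C b) ∧
      t = polyY (C u) * φ' + polyY (C b) := by
  obtain ⟨N, e, u, hN, hu, hz, ht⟩ := h.exists_mul_eq hzt
  obtain ⟨a, rfl⟩ : ∃ a : F, C a = N := natDegree_eq_zero.1 (Nat.eq_zero_of_not_pos fun hdeg => by
    have := h.labs_mul_labs_sub hu hz ht
    rw [labs_sub_eq_left (ht1.trans_lt hz1)] at this
    exact (lt_mul_of_one_lt_left (one_pos.trans hz1) (one_lt_labs_polyY_iff.2 hdeg)).not_ge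
      (this.trans_le (one_lt_labs_iff.1 hz1)))
  have ha : a ≠ 0 := C_ne_zero.1 hN
  have eq_of_mul_eq {w ψ : LaurentSeries F}
      (hw : polyY (C a) * w = polyY (C u) * ψ + polyY e) :
      w = polyY (C (a⁻¹ * u)) * ψ + polyY (C a⁻¹ * e) := by
    rw [C_mul, polyY_mul, polyY_mul, mul_assoc, ← mul_add, ← hw, ← mul_assoc, ← polyY_mul, ← C_mul,
      inv_mul_cancel₀ ha, C_1, polyY_one, one_mul]
  have hv : a⁻¹ * u ≠ 0 := mul_ne_zero (inv_ne_zero ha) hu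
  obtain ⟨b, hb⟩ : ∃ b : F, C b = C a⁻¹ * e := by
    refine natDegree_eq_zero.1 (Nat.eq_zero_of_not_pos fun hdeg => ?_)
    refine (one_lt_labs_polyY_iff.2 hdeg).not_ge ?_
    rw [← sub_eq_of_eq_add' (eq_of_mul_eq ht)]
    refine (labs_sub_le_max _ _).trans (max_le ht1 ?_)
    rw [labs_mul, labs_polyY_C hv, one_mul]
    exact h.labs_conj_lt_one.le
  exact ⟨a⁻¹ * u, b, hv, hb ▸ eq_of_mul_eq hz, hb ▸ eq_of_mul_eq ht⟩

theorem labs_eq_of_one_lt_labs_of_labs_le_one (hzt : (z, t) ∈ thetaPairs φ φ')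
    (hz1 : 1 < labs z) (ht1 : labs t ≤ 1) : labs z = q := by
  have labs_sub_eq : labs (z - t) = labs z := labs_sub_eq_left (ht1.trans_lt hz1)
  exact (labs_sub_eq ▸ h.labs_sub_le_of_mem hzt).antisymm (one_lt_labs_iff.1 hz1)

end IsGoldenPair

/-! ### Separation of conjugates along the expansion -/

namespace ContFrac

variable {x : LaurentSeries F} (c : ContFrac x)

theorem labs_trajectory_le_one_of_le {t : LaurentSeries F} {m n : ℕ} (hmn : m ≤ n)
    (ht : labs (c.trajectory t m) ≤ 1) : labs (c.trajectory t n) ≤ 1 := by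
  induction n, hmn using Nat.le_induction with
  | base => exact ht
  | succ n _ ih =>
    have := c.one_lt_labs_digit n
    refine (labs_inv_lt_one ?_).le
    rwa [labs_sub_eq_right (ih.trans_lt this)]

theorem one_lt_labs_trajectory_zero {z : LaurentSeries F} (hz : ¬IsRatL z)
    (hxz : labs (x - z) < 1) : 1 < labs (c.trajectory z 0) := by
  rw [trajectory, gaussStep, labs_inv,
    one_lt_inv₀ (labs_pos.2 (sub_polyY_ne_zero hz _)), ← sub_sub_sub_cancel_left _ _ x]
  refine (labs_sub_le_max _ _).trans_lt (max_lt ?_ hxz)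
  rw [sub_eq_of_eq_add' c.eq_floor_add]
  exact labs_inv_lt_one (c.one_lt_labs_tail 0)

theorem pow_mul_labs_sub_le_labs_trajectory_sub {z t : LaurentSeries F} (hz : ¬IsRatL z)
    (ht : ¬IsRatL t) (hz1 : ∀ n, 1 < labs (c.trajectory z n))
    (ht1 : ∀ n, 1 < labs (c.trajectory t n)) (n : ℕ) :
    q ^ n * labs (z - t) ≤ labs (c.trajectory z n - c.trajectory t n) := by
  induction n with
  | zero =>
    rw [pow_zero, one_mul, trajectory, trajectory,
      labs_gaussStep_sub_gaussStep (sub_polyY_ne_zero hz _) (sub_polyY_ne_zero ht _)]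
    exact le_mul_of_one_le_right (labs_nonneg _) (one_lt_mul_of_lt_of_le (hz1 0) (ht1 0).le).le
  | succ n ih =>
    rw [trajectory, trajectory, labs_gaussStep_sub_gaussStep
      (sub_polyY_ne_zero (c.not_isRatL_trajectory hz n) _)
      (sub_polyY_ne_zero (c.not_isRatL_trajectory ht n) _), pow_succ, mul_right_comm]
    refine mul_le_mul ih ?_ q_pos.le (labs_nonneg _)
    exact (one_lt_labs_iff.1 (hz1 (n + 1))).trans
      (le_mul_of_one_le_right (labs_nonneg _) (ht1 (n + 1)).le)

theorem labs_pullback_sub_mul_pow_le (n : ℕ) {w t : LaurentSeries F} (hw : 1 < labs w)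
    (ht : 1 ≤ labs t) : labs (c.pullback n w - c.pullback n t) * q ^ (n + 1) ≤ labs (w - t) := by
  induction n generalizing w t with
  | zero =>
    rw [zero_add, pow_one, ← le_div_iff₀ q_pos, pullback, pullback, add_sub_add_left_eq_sub]
    exact labs_inv_sub_inv_le hw ht
  | succ n ih =>
    have labs_t_inv : labs t⁻¹ ≤ 1 := (labs_inv t).trans_le (inv_le_one_of_one_le₀ ht)
    have hdigit := c.one_lt_labs_digit n
    rw [pow_succ, ← mul_assoc, ← le_div_iff₀ q_pos]
    refine (ih (one_lt_labs_polyY_add (c.natDegree_digit_pos n) (labs_inv_lt_one hw)) ?_).trans ?_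
    · rw [labs_add_eq_left (labs_t_inv.trans_lt hdigit)]
      exact hdigit.le
    · rw [add_sub_add_left_eq_sub]
      exact labs_inv_sub_inv_le hw ht

end ContFrac

namespace IsGoldenPair

variable {φ φ' x z t : LaurentSeries F} (h : IsGoldenPair φ φ') (c : ContFrac x)

include h

theorem trajectory_mem (hzt : (z, t) ∈ thetaPairs φ φ') (n : ℕ) :
    (c.trajectory z n, c.trajectory t n) ∈ thetaPairs φ φ' := by
  induction n with
  | zero => exact gaussStep_mem_thetaPairs h.not_isRatL h.not_isRatL_conj hzt _
  | succ n ih => exact gaussStep_mem_thetaPairs h.not_isRatL h.not_isRatL_conj ih _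

theorem pullback_mem (hzt : (z, t) ∈ thetaPairs φ φ') (n : ℕ) :
    (c.pullback n z, c.pullback n t) ∈ thetaPairs φ φ' := by
  have add_inv_mem {z t : LaurentSeries F} (hzt : (z, t) ∈ thetaPairs φ φ') (P : F[X]) :
      (polyY P + z⁻¹, polyY P + t⁻¹) ∈ thetaPairs φ φ' := by
    refine polyY_add_inv_mem_thetaPairs h.not_isRatL h.not_isRatL_conj hzt ?_ ?_ P
    · rintro rfl
      exact h.not_isRatL_of_mem hzt (polyY_zero (F := F) ▸ isRatL_polyY 0)
    · rintro rfl
      exact h.not_isRatL_conj_of_mem hzt (polyY_zero (F := F) ▸ isRatL_polyY 0)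
  induction n generalizing z t with
  | zero => exact add_inv_mem hzt _
  | succ n ih => exact ih (add_inv_mem hzt _)

theorem exists_labs_trajectory_le_one (hzt : (z, t) ∈ thetaPairs φ φ') :
    ∃ n, labs (c.trajectory z n) ≤ 1 ∨ labs (c.trajectory t n) ≤ 1 := by
  by_contra! hlarge
  have hpos := h.labs_sub_pos_of_mem hzt
  obtain ⟨n, hn⟩ := pow_unbounded_of_one_lt (q / labs (z - t)) (one_lt_q (F := F))
  rw [div_lt_iff₀ hpos] at hn
  refine hn.not_ge ?_
  exact (c.pow_mul_labs_sub_le_labs_trajectory_sub (h.not_isRatL_of_mem hzt)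
    (h.not_isRatL_conj_of_mem hzt) (hlarge · |>.1) (hlarge · |>.2) n).trans
    (h.labs_sub_le_of_mem (h.trajectory_mem c hzt n))

theorem eventually_natDegree_digit_eq_one (hx : x ∈ theta φ φ') :
    ∀ᶠ n in atTop, (c.digit n).natDegree = 1 := by
  obtain ⟨⟨x, x'⟩, hmem, rfl⟩ := hx
  obtain ⟨m, hm⟩ := h.exists_labs_trajectory_le_one c hmem
  replace hm : labs (c.trajectory x' m) ≤ 1 := hm.resolve_left <| by
    rw [c.trajectory_self]
    exact (c.one_lt_labs_tail m).not_ge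
  filter_upwards [eventually_ge_atTop m] with n hn
  have labs_tail := h.labs_eq_of_one_lt_labs_of_labs_le_one (h.trajectory_mem c hmem n)
    (c.trajectory_self n ▸ c.one_lt_labs_tail n) (c.labs_trajectory_le_one_of_le hn hm)
  rw [c.trajectory_self, ← c.labs_digit, labs_polyY (c.digit_ne_zero n)] at labs_tail
  exact pow_right_injective₀ q_pos one_lt_q.ne' (labs_tail.trans (pow_one q).symm)

theorem frequently_digit_ne_X (hx : x ∉ theta φ φ') : ∃ᶠ n in atTop, c.digit n ≠ X := by
  refine fun hX => hx ?_
  obtain ⟨m, hm⟩ := eventually_atTop.1 hX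
  have tail_eq : c.tail m = φ := ContFrac.tail_eq_of_digit_eq (d := h.contFrac) (n := 0) fun k =>
    not_not.1 (hm (m + k) (m.le_add_right k))
  have mem := h.pullback_mem c (self_mem_thetaPairs (α := φ) (α' := φ')) m
  rw [← tail_eq, c.pullback_tail] at mem
  exact ⟨_, tail_eq ▸ mem, rfl⟩

end IsGoldenPair

/-! ### Cross ratios with the golden pair -/

theorem labs_sub_eq_of_labs_sub_polyY_lt {P Q : F[X]} (hPQ : P ≠ Q) {y z : LaurentSeries F}
    (hy : labs (y - polyY P) < 1) (hz : labs (z - polyY Q) < 1) :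
    labs (y - z) = labs (polyY (P - Q)) := by
  have hlt : labs (y - polyY P - (z - polyY Q)) < labs (polyY (P - Q)) :=
    ((labs_sub_le_max _ _).trans_lt (max_lt hy hz)).trans_le
      (one_le_labs_polyY (sub_ne_zero.2 hPQ))
  rw [← labs_add_eq_right hlt, polyY_sub]
  congr 1
  ring

theorem natDegree_sub_C_mul_X {R : Type*} [CommRing R] {P : R[X]} (hP : 0 < P.natDegree)
    (hmonic : P.natDegree = 1 → P.Monic) {u : R} (hu : u ≠ 1) :
    (P - C u * X).natDegree = P.natDegree := by
  rcases (Nat.succ_le_of_lt hP).lt_or_eq' with hdeg | hdeg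
  · refine natDegree_sub_eq_left_of_natDegree_lt (lt_of_le_of_lt ?_ hdeg)
    exact (natDegree_C_mul_le u X).trans natDegree_X_le
  · have eq_linear : P - C u * X = C (1 - u) * X + C (P.coeff 0) := by
      nth_rw 1 [(hmonic hdeg).eq_X_add_C hdeg]
      rw [C_sub, C_1]
      ring
    rw [eq_linear, natDegree_linear (sub_ne_zero.2 hu.symm), hdeg]

theorem labs_polyY_sub_C_mul_X {P : F[X]} (hP : 0 < P.natDegree)
    (hmonic : P.natDegree = 1 → P.Monic) {u : F} (hu : u ≠ 1) :
    labs (polyY (P - C u * X)) = labs (polyY P) := by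
  have hdeg := natDegree_sub_C_mul_X hP hmonic hu
  rw [labs_polyY (ne_zero_of_natDegree_gt hP),
    labs_polyY (ne_zero_of_natDegree_gt (hdeg ▸ hP)), hdeg]

theorem labs_polyY_le_q_mul_labs_polyY_sub {P Q : F[X]} (hPQ : P ≠ Q) (hQ : Q.natDegree ≤ 1) :
    labs (polyY P) ≤ q * labs (polyY (P - Q)) := by
  have hsub : 1 ≤ labs (polyY (P - Q)) := one_le_labs_polyY (sub_ne_zero.2 hPQ)
  have labs_Q_le : labs (polyY Q) ≤ q :=
    (labs_polyY_le Q).trans ((pow_le_pow_right₀ one_lt_q.le hQ).trans_eq (pow_one q))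
  rcases le_or_gt (labs (polyY P)) q with hP | hP
  · exact hP.trans (le_mul_of_one_le_right q_pos.le hsub)
  · rw [polyY_sub, labs_sub_eq_left (labs_Q_le.trans_lt hP)]
    exact le_mul_of_one_le_left (labs_nonneg _) one_lt_q.le

namespace ContFrac

variable {x : LaurentSeries F} (c : ContFrac x)

theorem labs_tail_sub_digit_lt_one (n : ℕ) : labs (c.tail n - polyY (c.digit n)) < 1 :=
  c.tail_sub_digit n ▸ labs_inv_lt_one (c.one_lt_labs_tail _)

theorem crossRatio_tail_past (n : ℕ) (z t : LaurentSeries F) :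
    crossRatio (c.tail n) (c.past n) z t =
      labs (c.tail n - z) / labs (c.tail n) * (labs (c.past n - t) / labs (z - t)) := by
  rw [crossRatio, labs_tail_sub_past, div_mul_div_comm]

end ContFrac

namespace IsGoldenPair

variable {φ φ' x z t : LaurentSeries F} (h : IsGoldenPair φ φ') (c : ContFrac x)

include h

theorem labs_sub_X_lt_one : labs (φ - polyY X) < 1 := by
  rw [← h.add_eq, sub_add_cancel_left, labs_neg]
  exact h.labs_conj_lt_one

theorem crossRatio_le (n : ℕ) : crossRatio (c.tail n) (c.past n) φ φ' ≤ q ^ (-2 : ℤ) := by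
  have tail_le : labs (c.tail n - φ) ≤ labs (c.tail n) := by
    refine (labs_sub_le_max _ _).trans (max_le le_rfl ?_)
    exact h.labs_eq.trans_le (one_lt_labs_iff.1 (c.one_lt_labs_tail n))
  have past_le : labs (c.past n - φ') ≤ q⁻¹ := labs_lt_one_iff.1 <|
    (labs_sub_le_max _ _).trans_lt (max_lt (c.labs_past_lt_one n) h.labs_conj_lt_one)
  calc crossRatio (c.tail n) (c.past n) φ φ'
      = labs (c.tail n - φ) / labs (c.tail n) * (labs (c.past n - φ') / q) := by
        rw [c.crossRatio_tail_past, h.labs_sub_conj]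
    _ ≤ 1 * (q⁻¹ / q) :=
        mul_le_mul (div_le_one_of_le₀ tail_le (labs_nonneg _))
          (div_le_div_of_nonneg_right past_le q_pos.le)
          (div_nonneg (labs_nonneg _) q_pos.le) zero_le_one
    _ = q ^ (-2 : ℤ) := by rw [one_mul, div_eq_mul_inv, ← mul_inv, ← pow_two]; rfl

theorem crossRatio_succ_of_digit_eq {n : ℕ} {b : F} (hn : c.digit n = X + C b) :
    crossRatio (c.tail (n + 1)) (c.past (n + 1)) φ φ' =
      crossRatio (c.tail n) (c.past n) (φ + polyY (C b)) (φ' + polyY (C b)) := by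
  have gaussStep_add (ψ : LaurentSeries F) :
      gaussStep (c.digit n) (ψ + polyY (C b)) = gaussStep X ψ := by
    rw [gaussStep, gaussStep, hn, polyY_add, add_sub_add_right_eq_sub]
  have ne_zero {ψ : LaurentSeries F} (hψ : ¬IsRatL ψ) :
      ψ + polyY (C b) - polyY (c.digit n) ≠ 0 := by
    rw [hn, polyY_add, add_sub_add_right_eq_sub]
    exact sub_polyY_ne_zero hψ _
  rw [← c.crossRatio_step n (ne_zero h.not_isRatL) (ne_zero h.not_isRatL_conj), gaussStep_add,
    gaussStep_add, h.gaussStep_X, h.gaussStep_X_conj]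

theorem labs_sub_C_mul {P : F[X]} (hP : 0 < P.natDegree) (hmonic : P.natDegree = 1 → P.Monic)
    {u : F} (hu0 : u ≠ 0) (hu1 : u ≠ 1) {y : LaurentSeries F} (hy : labs (y - polyY P) ≤ 1) :
    labs (y - polyY (C u) * φ) = labs (polyY P) := by
  have hlt : labs (y - polyY P - polyY (C u) * (φ - polyY X)) < labs (polyY (P - C u * X)) := by
    rw [labs_polyY_sub_C_mul_X hP hmonic hu1]
    refine ((labs_sub_le_max _ _).trans (max_le hy ?_)).trans_lt (one_lt_labs_polyY_iff.2 hP)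
    rw [labs_mul, labs_polyY_C hu0, one_mul]
    exact h.labs_sub_X_lt_one.le
  rw [← labs_polyY_sub_C_mul_X hP hmonic hu1, ← labs_add_eq_right hlt, polyY_sub, polyY_mul]
  congr 1
  ring

theorem inv_le_labs_past_succ_sub {n : ℕ}
    (hmonic : (c.digit n).natDegree = 1 → (c.digit n).Monic) {u : F} (hu0 : u ≠ 0) (hu1 : u ≠ 1)
    (b : F) : q⁻¹ ≤ labs (c.past (n + 1) - (polyY (C u) * φ' + polyY (C b))) := by
  have labs_mul_conj : labs (polyY (C u) * φ') = q⁻¹ := by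
    rw [labs_mul, labs_polyY_C hu0, one_mul, h.labs_conj]
  rcases eq_or_ne b 0 with rfl | hb
  · have mul_conj_eq : polyY (C u) * φ' = (-(polyY (C u⁻¹) * φ))⁻¹ := by
      refine eq_inv_of_mul_eq_one_left ?_
      rw [mul_neg, mul_mul_mul_comm, mul_comm φ', h.mul_eq, ← polyY_mul, ← C_mul,
        mul_inv_cancel₀ hu0, C_1, polyY_one, one_mul, neg_neg]
    have labs_sub : labs (c.past n - polyY (c.digit n) - -(polyY (C u⁻¹) * φ)) =
        labs (c.tail n) := by
      rw [← neg_sub (polyY (c.digit n)), neg_sub_neg, labs_sub_comm, ← c.labs_digit]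
      refine h.labs_sub_C_mul (c.natDegree_digit_pos n) hmonic (inv_ne_zero hu0)
        (inv_ne_one.2 hu1) ?_
      rw [sub_sub_cancel_left, labs_neg]
      exact (c.labs_past_lt_one n).le
    rw [C_0, polyY_zero, add_zero, mul_conj_eq, ContFrac.past, gaussStep, labs_inv_sub_inv,
      labs_sub, c.labs_past_sub_digit, labs_neg, labs_mul, labs_polyY_C (inv_ne_zero hu0), one_mul,
      h.labs_eq]
    · rw [div_mul_cancel_left₀ (labs_pos.2 (c.tail_ne_zero n)).ne']
    · exact c.past_sub_digit_ne_zero n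
    · exact neg_ne_zero.2 (mul_ne_zero (polyY_eq_zero.not.2 (C_ne_zero.2 (inv_ne_zero hu0)))
        (ne_zero_of_one_lt_labs h.one_lt_labs))
  · rw [← sub_sub, labs_sub_eq_right, labs_polyY_C hb]
    · exact inv_le_one_of_one_le₀ one_lt_q.le
    · rw [labs_polyY_C hb]
      refine (labs_sub_le_max _ _).trans_lt (max_lt (c.labs_past_lt_one _) ?_)
      exact labs_mul_conj.trans_lt (inv_lt_one_of_one_lt₀ one_lt_q)

theorem zpow_le_crossRatio_of_ne_one {n : ℕ}
    (hdigit : (c.digit n).natDegree = 1 → (c.digit n).Monic)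
    (hdigit' : (c.digit (n + 1)).natDegree = 1 → (c.digit (n + 1)).Monic) {u : F} (hu0 : u ≠ 0)
    (hu1 : u ≠ 1) (b : F) :
    q ^ (-2 : ℤ) ≤ crossRatio (c.tail (n + 1)) (c.past (n + 1)) (polyY (C u) * φ + polyY (C b))
      (polyY (C u) * φ' + polyY (C b)) := by
  have tail_eq : labs (c.tail (n + 1) - (polyY (C u) * φ + polyY (C b))) =
      labs (c.tail (n + 1)) := by
    rw [add_comm (polyY (C u) * φ), ← sub_sub, ← c.labs_digit]
    refine h.labs_sub_C_mul (c.natDegree_digit_pos _) hdigit' hu0 hu1 ?_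
    rw [sub_right_comm]
    refine (labs_sub_le_max _ _).trans (max_le (c.labs_tail_sub_digit_lt_one _).le ?_)
    exact (labs_polyY_le _).trans_eq (by rw [natDegree_C, pow_zero])
  rw [c.crossRatio_tail_past, tail_eq, div_self (labs_pos.2 (c.tail_ne_zero _)).ne', one_mul,
    add_sub_add_right_eq_sub, ← mul_sub, labs_mul, labs_polyY_C hu0, one_mul, h.labs_sub_conj]
  calc q ^ (-2 : ℤ) = q⁻¹ / q := by rw [div_eq_mul_inv, ← mul_inv, ← pow_two]; rfl
    _ ≤ _ := div_le_div_of_nonneg_right (h.inv_le_labs_past_succ_sub c hdigit hu0 hu1 b) q_pos.le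

theorem zpow_le_crossRatio_of_digit_ne {n : ℕ} {b : F} (hb : b ≠ 0)
    (hdigit : c.digit n ≠ X + C b) :
    q ^ (-2 : ℤ) ≤
      crossRatio (c.tail n) (c.past n) (φ + polyY (C b)) (φ' + polyY (C b)) := by
  have tail_le : labs (c.tail n) ≤ q * labs (c.tail n - (φ + polyY (C b))) := by
    rw [labs_sub_eq_of_labs_sub_polyY_lt hdigit (c.labs_tail_sub_digit_lt_one n)
      (by rw [polyY_add, add_sub_add_right_eq_sub]; exact h.labs_sub_X_lt_one), ← c.labs_digit]
    refine labs_polyY_le_q_mul_labs_polyY_sub hdigit ?_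
    rw [natDegree_X_add_C]
  have past_eq : labs (c.past n - (φ' + polyY (C b))) = 1 := by
    rw [← sub_sub, labs_sub_eq_right, labs_polyY_C hb]
    rw [labs_polyY_C hb]
    exact (labs_sub_le_max _ _).trans_lt (max_lt (c.labs_past_lt_one _) h.labs_conj_lt_one)
  rw [c.crossRatio_tail_past, past_eq, add_sub_add_right_eq_sub, h.labs_sub_conj]
  calc q ^ (-2 : ℤ) = q⁻¹ * (1 / q) := by rw [one_div, ← mul_inv, ← pow_two]; rfl
    _ ≤ _ := by
      refine mul_le_mul_of_nonneg_right ?_ (one_div_nonneg.2 q_pos.le)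
      rwa [le_div_iff₀ (labs_pos.2 (c.tail_ne_zero n)), inv_mul_le_iff₀ q_pos]

theorem le_crossRatio_of_labs_le_one (hdigit : ∀ n, (c.digit n).natDegree = 1 → (c.digit n).Monic)
    {ρ : ℝ} (hρ : ρ ≤ q ^ (-2 : ℤ))
    (hcross : ∀ n, ρ ≤ crossRatio (c.tail (n + 1)) (c.past (n + 1)) φ φ')
    (hzt : (z, t) ∈ thetaPairs φ φ') (hz : 1 < labs z) (ht : labs t ≤ 1) (n : ℕ) :
    ρ ≤ crossRatio (c.tail (n + 1)) (c.past (n + 1)) z t := by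
  obtain ⟨u, b, hu0, rfl, rfl⟩ := h.exists_eq_of_one_lt_labs_of_labs_le_one hzt hz ht
  rcases eq_or_ne u 1 with rfl | hu1
  · rw [C_1, polyY_one, one_mul, one_mul]
    rcases eq_or_ne b 0 with rfl | hb
    · rw [C_0, polyY_zero, add_zero, add_zero]
      exact hcross n
    by_cases hdigit_eq : c.digit (n + 1) = X + C b
    · rw [← h.crossRatio_succ_of_digit_eq c hdigit_eq]
      exact hcross (n + 1)
    · exact hρ.trans (h.zpow_le_crossRatio_of_digit_ne c hb hdigit_eq)
  · exact hρ.trans (h.zpow_le_crossRatio_of_ne_one c (hdigit _) (hdigit _) hu0 hu1 b)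

end IsGoldenPair

/-! ### Lower bound for the approximation ratios -/

namespace IsGoldenPair

variable {φ φ' x z t : LaurentSeries F} (h : IsGoldenPair φ φ') (c : ContFrac x)

include h

theorem inv_le_crossRatio_of_labs_gaussStep_le_one {n : ℕ} (hzt : (z, t) ∈ thetaPairs φ φ')
    (ht : 1 < labs t) (hz : labs (gaussStep (c.digit n) z) ≤ 1) :
    q⁻¹ ≤ crossRatio (c.tail n) (c.past n) z t := by
  have hpos : 0 < labs (z - t) := h.labs_sub_pos_of_mem hzt
  have hle : labs (z - t) ≤ q := h.labs_sub_le_of_mem hzt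
  have past_eq : labs (c.past n - t) = labs t :=
    labs_sub_eq_right ((c.labs_past_lt_one n).trans ht)
  have one_le_digit : 1 ≤ labs (polyY (c.digit n) - z) := by
    have := labs_pos.2 (sub_polyY_ne_zero (h.not_isRatL_of_mem hzt) (c.digit n))
    rw [labs_sub_comm]
    rwa [gaussStep, labs_inv, inv_le_one₀ this] at hz
  have one_le_tail : 1 ≤ labs (c.tail n - z) := by
    rw [← sub_add_sub_cancel _ (polyY (c.digit n)), labs_add_eq_right]
    · exact one_le_digit
    · exact (c.labs_tail_sub_digit_lt_one n).trans_le one_le_digit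
  have tail_pos := labs_pos.2 (c.tail_ne_zero n)
  rw [c.crossRatio_tail_past, past_eq]
  rcases le_or_gt (labs (c.tail n)) (labs t) with htail | htail
  · calc q⁻¹ = 1 / labs (c.tail n) * (labs (c.tail n) / q) := by field_simp
      _ ≤ _ := by gcongr
  · have sub_le : labs (z - t) ≤ labs t := hle.trans (one_lt_labs_iff.1 ht)
    have z_lt : labs z < labs (c.tail n) := by
      rw [← sub_add_cancel z t]
      exact (isNonarchimedean_labs _ _).trans_lt (max_lt (sub_le.trans_lt htail) htail)
    rw [labs_sub_eq_left z_lt, div_self tail_pos.ne', one_mul]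
    exact (inv_le_one_of_one_le₀ one_lt_q.le).trans ((one_le_div hpos).2 sub_le)

theorem le_labs_sub_div_labs_sub (hdigit : ∀ n, (c.digit n).natDegree = 1 → (c.digit n).Monic)
    {ρ : ℝ} (hρ : ρ ≤ q ^ (-2 : ℤ))
    (hcross : ∀ n, ρ ≤ crossRatio (c.tail (n + 1)) (c.past (n + 1)) φ φ')
    (hzt : (z, t) ∈ thetaPairs φ φ') (hlt : labs (z - t) < 1) :
    ρ ≤ labs (x - z) / labs (z - t) := by
  have hpos : 0 < labs (z - t) := h.labs_sub_pos_of_mem hzt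
  have hρ_inv : ρ ≤ q⁻¹ := hρ.trans (by
    rw [← zpow_neg_one]
    exact zpow_le_zpow_right₀ one_lt_q.le (by lia))
  rcases le_or_gt (labs (z - t)) (labs (x - z)) with hle | hclose
  · exact hρ_inv.trans ((inv_le_one_of_one_le₀ one_lt_q.le).trans ((one_le_div hpos).2 hle))
  have hz := h.not_isRatL_of_mem hzt
  have ht := h.not_isRatL_conj_of_mem hzt
  have hxt : labs (x - t) < 1 := by
    rw [← sub_add_sub_cancel x z t]
    exact (isNonarchimedean_labs _ _).trans_lt (max_lt (hclose.trans hlt) hlt)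
  have hsep := h.exists_labs_trajectory_le_one c hzt
  obtain ⟨m, hm⟩ : ∃ m, Nat.find hsep = m + 1 := Nat.exists_eq_succ_of_ne_zero fun h0 => by
    rcases h0 ▸ Nat.find_spec hsep with hle | hle
    · exact hle.not_gt (c.one_lt_labs_trajectory_zero hz (hclose.trans hlt))
    · exact hle.not_gt (c.one_lt_labs_trajectory_zero ht hxt)
  have hsucc := hm ▸ Nat.find_spec hsep
  obtain ⟨-, ht_m⟩ := not_or.1 (Nat.find_min hsep (m := m) (by lia))
  rcases le_or_gt (labs (c.trajectory z (m + 1))) 1 with hz_succ | hz_succ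
  · rw [← c.crossRatio_trajectory hz ht m]
    exact hρ_inv.trans (h.inv_le_crossRatio_of_labs_gaussStep_le_one c (h.trajectory_mem c hzt m)
      (not_le.1 ht_m) hz_succ)
  · rw [← c.crossRatio_trajectory hz ht (m + 1)]
    exact h.le_crossRatio_of_labs_le_one c hdigit hρ hcross (h.trajectory_mem c hzt (m + 1)) hz_succ
      (hsucc.resolve_left hz_succ.not_ge) m

end IsGoldenPair

/-! ### The approximation constant -/

section Capprox

variable {α α' x : LaurentSeries F} {ρ ρ' : ℝ}

theorem hasBasis_thetaFilter : (thetaFilter α α').HasBasis (0 < ·) fun ε =>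
    {p | p ∈ thetaPairs α α' ∧ labs (p.1 - p.2) < ε} := by
  refine (((nhds_basis_abs_sub_lt (0 : ℝ)).comap fun p : LaurentSeries F × LaurentSeries F =>
    labs (p.1 - p.2)).principal_inf (thetaPairs α α')).congr (fun _ => Iff.rfl) fun ε _ => ?_
  simp only [sub_zero, abs_of_nonneg (labs_nonneg _), Set.preimage_ofPred_eq]
  rfl

theorem isBoundedUnder_labs_div (x : LaurentSeries F)
    (l : Filter (LaurentSeries F × LaurentSeries F)) :
    l.IsBoundedUnder (· ≥ ·) fun p => labs (x - p.1) / labs (p.1 - p.2) :=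
  isBoundedUnder_of ⟨0, fun _ => div_nonneg (labs_nonneg _) (labs_nonneg _)⟩

theorem capprox_le (h : ∃ᶠ p in thetaFilter α α', labs (x - p.1) / labs (p.1 - p.2) ≤ ρ) :
    capprox α α' x ≤ ρ :=
  liminf_le_of_frequently_le h (isBoundedUnder_labs_div x _)

theorem le_capprox (h : ∃ᶠ p in thetaFilter α α', labs (x - p.1) / labs (p.1 - p.2) ≤ ρ)
    (h' : ∀ᶠ p in thetaFilter α α', ρ' ≤ labs (x - p.1) / labs (p.1 - p.2)) :
    ρ' ≤ capprox α α' x :=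
  le_liminf_of_le (IsCoboundedUnder.of_frequently_le h) h'

theorem capprox_nonneg (h : ∃ᶠ p in thetaFilter α α', labs (x - p.1) / labs (p.1 - p.2) ≤ ρ) :
    0 ≤ capprox α α' x :=
  le_capprox h (Eventually.of_forall fun _ => div_nonneg (labs_nonneg _) (labs_nonneg _))

/-- The ratios take their values in the discrete set `{0} ∪ q^ℤ`, hence so does their `liminf`. -/
theorem capprox_eq_zero_or_exists_eq_zpow
    (h : ∃ᶠ p in thetaFilter α α', labs (x - p.1) / labs (p.1 - p.2) ≤ ρ) :
    capprox α α' x = 0 ∨ ∃ k : ℤ, capprox α α' x = q ^ k := by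
  refine (capprox_nonneg h).eq_or_lt'.imp_right fun hpos => ?_
  obtain ⟨k, hk, hk'⟩ := exists_mem_Ioc_zpow hpos (one_lt_q (F := F))
  refine ⟨k + 1, hk'.antisymm (le_capprox h ?_)⟩
  filter_upwards [eventually_lt_of_lt_liminf hk (isBoundedUnder_labs_div x _)] with p hp
  rw [← labs_div] at hp ⊢
  exact zpow_lt_labs_iff.1 hp

end Capprox

namespace IsGoldenPair

variable {φ φ' x : LaurentSeries F} (h : IsGoldenPair φ φ') (c : ContFrac x)

include h

theorem labs_pullback_sub_mul_pow_le {n : ℕ} (hn : c.digit n ≠ X) :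
    labs (c.pullback (n + 1) φ - c.pullback (n + 1) φ') * q ^ (n + 1) ≤ q := by
  have conj_inv_eq : φ'⁻¹ = -φ := by rw [← inv_inv φ, h.inv_eq, inv_neg, neg_neg]
  have labs_conj_side : 1 ≤ labs (polyY (c.digit n) + φ'⁻¹) := by
    rw [conj_inv_eq, ← sub_eq_add_neg, labs_sub_eq_of_labs_sub_polyY_lt hn
      (by rw [sub_self, labs_zero]; exact one_pos) h.labs_sub_X_lt_one]
    exact one_le_labs_polyY (sub_ne_zero.2 hn)
  refine (c.labs_pullback_sub_mul_pow_le n (one_lt_labs_polyY_add (c.natDegree_digit_pos n)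
    (labs_inv_lt_one h.one_lt_labs)) labs_conj_side).trans_eq ?_
  rw [add_sub_add_left_eq_sub, h.inv_eq, conj_inv_eq, sub_neg_eq_add, neg_add_eq_sub,
    h.labs_sub_conj]

theorem frequently_labs_div_le {ρ : ℝ} (hfreq : ∃ᶠ n in atTop, c.digit n ≠ X ∧
      crossRatio (c.tail (n + 1)) (c.past (n + 1)) φ φ' ≤ ρ) :
    ∃ᶠ p in thetaFilter φ φ', labs (x - p.1) / labs (p.1 - p.2) ≤ ρ := by
  refine hasBasis_thetaFilter.frequently_iff.2 fun ε hε => ?_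
  have hlim : ∀ᶠ n in atTop, q / ε < q ^ (n + 1) :=
    (tendsto_add_atTop_nat 1).eventually
      ((tendsto_pow_atTop_atTop_of_one_lt one_lt_q).eventually_gt_atTop _)
  obtain ⟨n, ⟨hn, hcross⟩, hlt⟩ := (hfreq.and_eventually hlim).exists
  have mem := h.pullback_mem c (self_mem_thetaPairs (α := φ) (α' := φ')) (n + 1)
  refine ⟨(c.pullback (n + 1) φ, c.pullback (n + 1) φ'), ⟨mem, ?_⟩, ?_⟩
  · rw [div_lt_iff₀' hε] at hlt
    exact lt_of_mul_lt_mul_right ((h.labs_pullback_sub_mul_pow_le c hn).trans_lt hlt)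
      (pow_nonneg q_pos.le _)
  · rwa [← c.crossRatio_trajectory (h.not_isRatL_of_mem mem) (h.not_isRatL_conj_of_mem mem) (n + 1),
      c.trajectory_pullback, c.trajectory_pullback]

theorem capprox_eq_zero_or_exists_eq (hx : ¬IsRatL x) (hx' : x ∉ theta φ φ') :
    capprox φ φ' x = 0 ∨ ∃ n : ℕ, capprox φ φ' x = q ^ (-(n : ℤ) - 2) := by
  obtain ⟨c⟩ := ContFrac.nonempty_of_not_isRatL hx
  have hfreq : ∃ᶠ p in thetaFilter φ φ', labs (x - p.1) / labs (p.1 - p.2) ≤ q ^ (-2 : ℤ) :=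
    h.frequently_labs_div_le c <| (h.frequently_digit_ne_X c hx').mono fun n hn =>
      ⟨hn, h.crossRatio_le c (n + 1)⟩
  refine (capprox_eq_zero_or_exists_eq_zpow hfreq).imp_right ?_
  rintro ⟨k, hk⟩
  have hk_le : k ≤ -2 := (zpow_le_zpow_iff_right₀ one_lt_q).1 (hk ▸ capprox_le hfreq)
  exact ⟨(-k - 2).toNat, by rw [hk]; congr 1; lia⟩

theorem capprox_eq (c : ContFrac x)
    (hdigit : ∀ n, (c.digit n).natDegree = 1 → (c.digit n).Monic)
    (hne : ∃ᶠ n in atTop, c.digit n ≠ X) {ρ : ℝ}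
    (hcross : ∀ n, crossRatio (c.tail (n + 1)) (c.past (n + 1)) φ φ' = ρ) :
    capprox φ φ' x = ρ := by
  have hfreq := h.frequently_labs_div_le c (hne.mono fun n hn => ⟨hn, (hcross n).le⟩)
  refine (capprox_le hfreq).antisymm (le_capprox hfreq ?_)
  refine hasBasis_thetaFilter.eventually_iff.2 ⟨1, one_pos, fun p hp => ?_⟩
  exact h.le_labs_sub_div_labs_sub c hdigit (hcross 0 ▸ h.crossRatio_le c 1)
    (fun n => (hcross n).ge) hp.1 hp.2

end IsGoldenPair

/-! ### Runs of the digit `Y` -/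

/-- The factor contributed to a cross ratio with the golden pair by a digit `P ≠ Y` at the end of
a run of digits `Y`. -/
noncomputable def goldenGap (P : F[X]) : ℝ := labs (polyY (P - X)) / labs (polyY P)

theorem goldenGap_X_sq : goldenGap (X ^ 2 : F[X]) = 1 := by
  have hlt : labs (polyY (X : F[X])) < labs (polyY (X ^ 2 : F[X])) := by
    rw [labs_polyY X_ne_zero, labs_polyY (pow_ne_zero 2 X_ne_zero), natDegree_X, natDegree_X_pow]
    exact pow_lt_pow_right₀ one_lt_q one_lt_two
  rw [goldenGap, polyY_sub, labs_sub_eq_left hlt,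
    div_self (labs_pos.2 (polyY_eq_zero.not.2 (pow_ne_zero 2 X_ne_zero))).ne']

theorem goldenGap_X_add_one : goldenGap (X + 1 : F[X]) = q⁻¹ := by
  rw [goldenGap, add_sub_cancel_left, polyY_one, labs_one, ← C_1,
    labs_polyY (X_add_C_ne_zero 1), natDegree_X_add_C, pow_one, one_div]

namespace IsGoldenPair

variable {φ φ' x : LaurentSeries F} (h : IsGoldenPair φ φ') (c : ContFrac x)

include h

theorem labs_tail_sub_div {n : ℕ} (hn : c.digit n ≠ X) :
    labs (c.tail n - φ) / labs (c.tail n) = goldenGap (c.digit n) := by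
  rw [labs_sub_eq_of_labs_sub_polyY_lt hn (c.labs_tail_sub_digit_lt_one n) h.labs_sub_X_lt_one,
    ← c.labs_digit, goldenGap]

theorem labs_past_succ_sub (n : ℕ) :
    labs (c.past (n + 1) - φ') =
      labs (polyY (c.digit n) - c.past n - φ) / (labs (polyY (c.digit n)) * q) := by
  have labs_conj_sub : labs (φ' - polyY X) = q := by
    rw [← h.add_eq, sub_add_cancel_right, labs_neg, h.labs_eq]
  have sub_eq : c.past n - polyY (c.digit n) - (φ' - polyY X) =
      -(polyY (c.digit n) - c.past n - φ) := by
    rw [← h.add_eq]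
    ring
  nth_rw 1 [← h.gaussStep_X_conj]
  rw [ContFrac.past, gaussStep, gaussStep,
    labs_inv_sub_inv (c.past_sub_digit_ne_zero n) (labs_pos.1 (labs_conj_sub ▸ q_pos)), sub_eq,
    labs_neg, labs_conj_sub, c.labs_past_sub_digit, c.labs_digit]

theorem labs_past_succ_sub_of_digit_ne {n : ℕ} (hn : c.digit n ≠ X) :
    labs (c.past (n + 1) - φ') = goldenGap (c.digit n) / q := by
  rw [h.labs_past_succ_sub, labs_sub_eq_of_labs_sub_polyY_lt hn _ h.labs_sub_X_lt_one, goldenGap,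
    div_div]
  rw [sub_sub_cancel_left, labs_neg]
  exact c.labs_past_lt_one n

theorem labs_past_succ_sub_of_digit_eq {n : ℕ} (hn : c.digit n = X) :
    labs (c.past (n + 1) - φ') = labs (c.past n - φ') / q ^ 2 := by
  rw [h.labs_past_succ_sub, hn, sub_right_comm, ← h.add_eq, add_sub_cancel_left, labs_sub_comm,
    h.add_eq, labs_polyY X_ne_zero, natDegree_X, pow_one, ← pow_two]

theorem crossRatio_of_run {m k : ℕ} (hm : c.digit m ≠ X) (hmk : c.digit (m + 1 + k) ≠ X)
    (hrun : ∀ j < k, c.digit (m + 1 + j) = X) {j : ℕ} (hj : j ≤ k) :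
    crossRatio (c.tail (m + 1 + j)) (c.past (m + 1 + j)) φ φ' =
      goldenGap (c.digit m) * goldenGap (c.digit (m + 1 + k)) * q ^ (-(2 * k + 2) : ℤ) := by
  have labs_past : labs (c.past (m + 1 + k) - φ') = goldenGap (c.digit m) / q ^ (2 * k + 1) := by
    clear hmk hj
    induction k with
    | zero => simpa using h.labs_past_succ_sub_of_digit_ne c hm
    | succ k ih =>
      rw [← add_assoc, h.labs_past_succ_sub_of_digit_eq c (hrun k k.lt_succ_self),
        ih fun j hj => hrun j (hj.trans k.lt_succ_self), div_div, ← _root_.pow_add]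
      rfl
  induction hj using Nat.decreasingInduction with
  | self =>
    rw [c.crossRatio_tail_past, h.labs_tail_sub_div c hmk, labs_past, h.labs_sub_conj, div_div,
      ← pow_succ, zpow_neg, ← div_eq_mul_inv, mul_comm, div_mul_eq_mul_div]
    norm_cast
  | of_succ j hj ih =>
    rw [← ih]
    have := h.crossRatio_succ_of_digit_eq c (b := 0) (by rw [C_0, add_zero, hrun j hj])
    rw [← add_assoc, this, C_0, polyY_zero, add_zero, add_zero]

end IsGoldenPair

/-! ### Realizing the spectrum -/

/-- The digits `Y², Y, …, Y, B, Y, …, Y, Y², …` of a periodic continued fraction, in which `Y²` and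
`B` alternate and are separated by runs of `k` digits `Y`. -/
noncomputable def alternatingDigit (k : ℕ) (B : F[X]) (n : ℕ) : F[X] :=
  if k + 1 ∣ n then if Even (n / (k + 1)) then X ^ 2 else B else X

/-- The digits of a continued fraction in which `Y²` stands at the squares and `Y` elsewhere, so
that the runs of digits `Y` get longer and longer. -/
noncomputable def squareDigit (n : ℕ) : F[X] := if IsSquare n then X ^ 2 else X

section Digits

omit [Fintype F]

variable {B : F[X]} {a j k : ℕ}

theorem alternatingDigit_mul (k : ℕ) (B : F[X]) (a : ℕ) :
    alternatingDigit k B ((k + 1) * a) = if Even a then X ^ 2 else B := by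
  rw [alternatingDigit, if_pos (dvd_mul_right _ _), Nat.mul_div_cancel_left _ k.succ_pos]

theorem alternatingDigit_mul_add (B : F[X]) (a : ℕ) (hj : j < k) :
    alternatingDigit k B ((k + 1) * a + 1 + j) = X := by
  refine if_neg ?_
  rw [add_assoc, Nat.dvd_add_right (dvd_mul_right _ _)]
  exact Nat.not_dvd_of_pos_of_lt (by lia) (by lia)

theorem alternatingDigit_cases {p : F[X] → Prop} (hsq : p (X ^ 2)) (hB : p B) (hX : p X)
    (k n : ℕ) : p (alternatingDigit k B n) := by
  unfold alternatingDigit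
  split_ifs <;> assumption

theorem squareDigit_mul_self (a : ℕ) : squareDigit (a * a) = (X ^ 2 : F[X]) :=
  if_pos ⟨a, rfl⟩

theorem squareDigit_mul_self_add (hj : j < 2 * a) : squareDigit (a * a + 1 + j) = (X : F[X]) := by
  refine if_neg ?_
  rintro ⟨b, hb⟩
  exact Nat.not_exists_sq (m := a) (by lia) (by lia) ⟨b, hb.symm⟩

theorem X_sq_ne_X : (X ^ 2 : F[X]) ≠ X := fun h => by
  simpa using congrArg natDegree h

end Digits

theorem goldenGap_alternatingDigit_mul (k : ℕ) (B : F[X]) (a : ℕ) :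
    goldenGap (alternatingDigit k B ((k + 1) * a)) *
      goldenGap (alternatingDigit k B ((k + 1) * (a + 1))) = goldenGap B := by
  rw [alternatingDigit_mul, alternatingDigit_mul]
  by_cases ha : Even a
  · rw [if_pos ha, if_neg (by simpa [Nat.even_add_one] using ha), goldenGap_X_sq, one_mul]
  · rw [if_neg ha, if_pos (Nat.even_add_one.2 ha), goldenGap_X_sq, mul_one]

namespace IsGoldenPair

variable {φ φ' x : LaurentSeries F} (h : IsGoldenPair φ φ')

include h

theorem notMem_theta_of_frequently (c : ContFrac x) (hc : ∃ᶠ n in atTop, c.digit n = X ^ 2) :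
    x ∉ theta φ φ' := fun hx => by
  obtain ⟨n, hn, hdeg⟩ := (hc.and_eventually (h.eventually_natDegree_digit_eq_one c hx)).exists
  rw [hn, natDegree_X_pow] at hdeg
  exact absurd hdeg (by decide)

theorem goldenGap_mul_zpow_mem_quadSpectrum (k : ℕ) {B : F[X]} (hpos : 0 < B.natDegree)
    (hne : B ≠ X) (hmonic : B.natDegree = 1 → B.Monic) :
    goldenGap B * q ^ (-(2 * k + 2) : ℤ) ∈ quadSpectrum φ φ' := by
  obtain ⟨x, c, hc⟩ := ContFrac.exists_digit_eq (P := alternatingDigit k B)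
    (alternatingDigit_cases (p := (0 < natDegree ·)) (by simp) hpos (by simp) k)
  have hmonic : ∀ n, (c.digit n).natDegree = 1 → (c.digit n).Monic := hc ▸
    alternatingDigit_cases (p := fun P => P.natDegree = 1 → P.Monic) (fun _ => monic_X_pow 2)
      hmonic (fun _ => monic_X) k
  have hfreq : ∃ᶠ n in atTop, c.digit n = X ^ 2 := frequently_atTop.2 fun N =>
    ⟨(k + 1) * (2 * N), by nlinarith, by rw [hc, alternatingDigit_mul, if_pos (even_two_mul N)]⟩
  have digit_ne (a : ℕ) : c.digit ((k + 1) * a) ≠ X := by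
    rw [hc, alternatingDigit_mul]
    split_ifs
    exacts [X_sq_ne_X, hne]
  have hcross (n : ℕ) : crossRatio (c.tail (n + 1)) (c.past (n + 1)) φ φ' =
      goldenGap B * q ^ (-(2 * k + 2) : ℤ) := by
    set a := n / (k + 1)
    have next : (k + 1) * a + 1 + k = (k + 1) * (a + 1) := by ring
    have run := h.crossRatio_of_run c (digit_ne a) (next ▸ digit_ne (a + 1))
      (fun j hj => by rw [hc, alternatingDigit_mul_add B a hj])
      (Nat.lt_succ_iff.1 (Nat.mod_lt n k.succ_pos))
    rwa [add_right_comm, Nat.div_add_mod, next, hc, goldenGap_alternatingDigit_mul] at run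
  exact ⟨x, c.not_isRatL, h.notMem_theta_of_frequently c hfreq,
    (h.capprox_eq c hmonic (hfreq.mono fun n hn => hn ▸ X_sq_ne_X) hcross).symm⟩

theorem zero_mem_quadSpectrum : 0 ∈ quadSpectrum φ φ' := by
  obtain ⟨x, c, hc⟩ := ContFrac.exists_digit_eq (P := squareDigit (F := F)) fun n => by
    unfold squareDigit
    split_ifs <;> simp
  have digit_sq (a : ℕ) : c.digit (a * a) = X ^ 2 := by rw [hc, squareDigit_mul_self]
  have hcross (a : ℕ) : crossRatio (c.tail (a * a + 1)) (c.past (a * a + 1)) φ φ' =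
      q ^ (-(2 * (2 * a : ℕ) + 2) : ℤ) := by
    have next : a * a + 1 + 2 * a = (a + 1) * (a + 1) := by ring
    have run := h.crossRatio_of_run c (digit_sq a ▸ X_sq_ne_X)
      (by rw [next, digit_sq]; exact X_sq_ne_X)
      (fun j hj => by rw [hc, squareDigit_mul_self_add hj]) (Nat.zero_le _)
    rwa [next, digit_sq, digit_sq, goldenGap_X_sq, one_mul, one_mul] at run
  have hfreq (M : ℕ) : ∃ᶠ p in thetaFilter φ φ', labs (x - p.1) / labs (p.1 - p.2) ≤ q⁻¹ ^ M := by
    refine h.frequently_labs_div_le c <| frequently_atTop.2 fun N =>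
      ⟨(N + M) * (N + M), by nlinarith, digit_sq (N + M) ▸ X_sq_ne_X, ?_⟩
    rw [hcross, ← zpow_natCast, inv_zpow', zpow_le_zpow_iff_right₀ one_lt_q]
    lia
  have hlim : Tendsto (q⁻¹ ^ ·) atTop (nhds 0) :=
    tendsto_pow_atTop_nhds_zero_of_lt_one (inv_nonneg.2 q_pos.le) (inv_lt_one_of_one_lt₀ one_lt_q)
  refine ⟨x, c.not_isRatL, h.notMem_theta_of_frequently c <| frequently_atTop.2 fun N =>
    ⟨N * N, N.le_mul_self, digit_sq N⟩, (capprox_nonneg (hfreq 0)).antisymm ?_⟩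
  exact ge_of_tendsto' hlim fun M => capprox_le (hfreq M)

theorem zpow_mem_quadSpectrum (n : ℕ) : q ^ (-(n : ℤ) - 2) ∈ quadSpectrum φ φ' := by
  obtain ⟨k, rfl | rfl⟩ := n.even_or_odd'
  · convert h.goldenGap_mul_zpow_mem_quadSpectrum k (B := X ^ 2) (by simp) X_sq_ne_X (by simp)
      using 1
    rw [goldenGap_X_sq, one_mul]
    congr 1
    push_cast
    ring
  · convert h.goldenGap_mul_zpow_mem_quadSpectrum k (B := X + 1)
      (by simp [← C_1, -map_one]) (by simp) (fun _ => monic_X_add_C 1) using 1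
    rw [goldenGap_X_add_one, ← zpow_neg_one, ← zpow_add₀ q_pos.ne']
    congr 1
    push_cast
    ring

theorem quadSpectrum_eq :
    quadSpectrum φ φ' = {0} ∪ {x : ℝ | ∃ n : ℕ, x = q ^ (-(n : ℤ) - 2)} := by
  ext ρ
  constructor
  · rintro ⟨x, hx, hx', rfl⟩
    exact h.capprox_eq_zero_or_exists_eq hx hx'
  · rintro (rfl | ⟨n, rfl⟩)
    exacts [h.zero_mem_quadSpectrum, h.zpow_mem_quadSpectrum n]

end IsGoldenPair

end

/-- Let `φ = [Y, Y, Y, ...] ∈ 𝔽_q((Y⁻¹))` be the root of `X² = YX + 1`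
with `|φ| = q` (i.e. of order `-1` in `Y⁻¹`), whose Galois conjugate is `φ^σ = Y − φ`.
Then the quadratic Lagrange spectrum of `φ` is exactly
`Sp(φ) = {0} ∪ {q^{−n−2} : n ∈ ℕ}`. -/
theorem golden_ratio_spectrum
    (F : Type*) [Field F] [Fintype F]
    (φ : LaurentSeries F)
    (hroot : φ ^ 2 = HahnSeries.single (-1 : ℤ) (1 : F) * φ + 1)
    (horder : φ.order = -1) :
    quadSpectrum φ (HahnSeries.single (-1 : ℤ) (1 : F) - φ)
      = {0} ∪ {x : ℝ | ∃ n : ℕ, x = (Fintype.card F : ℝ) ^ (-(n : ℤ) - 2)} := by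
  have h : IsGoldenPair φ (HahnSeries.single (-1 : ℤ) (1 : F) - φ) :=
    { add_eq := by rw [add_sub_cancel, polyY_X]
      mul_eq := by linear_combination -hroot
      labs_eq := by
        have hφ : φ ≠ 0 := by
          rintro rfl
          simp at horder
        rw [labs_of_ne_zero hφ, horder, neg_neg, zpow_one] }
  exact h.quadSpectrum_eq
end
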